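/- arXiv:1304.1015 — 2 statements merged into one kernel-verified Lean document; each statement's English description precedes it below -/
import Mathlib

section
/- Let 𝔅 be a homothecy invariant basis of nonempty bounded open convex subsets of ℝⁿ and let w be a nonnegative locally integrable function on ℝⁿ with ∫_B w < ∞ for every B ∈ 𝔅; write w(A) = ∫_A w(x) dx. Let M_𝔅 denote the maximal operator with respect to Lebesgue measure. Then the following are equivalent: (i) there exist γ ∈ (0,1) and c > 0 such that w({x ∈ ℝⁿ : M_𝔅(1_E)(x) > γ}) ≤ c·w(E) for every Lebesgue measurable set E ⊆ ℝⁿ; (ii) there exists p₀ > 1 such that M_𝔅 is bounded on L^p(w) for every p > p₀. -/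
open MeasureTheory Set Filter
open scoped ENNReal Topology Pointwise

noncomputable section

/-- The maximal operator `M_{𝔅,μ}` associated to a measure `μ` and a collection `𝔅`
of subsets of `ℝⁿ`, applied to `f` at the point `x` (valued in `ℝ≥0∞`; it equals `0`
outside the union of `𝔅`). -/
noncomputable def maxOp {n : ℕ} (μ : Measure (EuclideanSpace ℝ (Fin n)))
    (𝔅 : Set (Set (EuclideanSpace ℝ (Fin n))))
    (f : EuclideanSpace ℝ (Fin n) → ℝ) (x : EuclideanSpace ℝ (Fin n)) : ℝ≥0∞ :=
  ⨆ (B : Set (EuclideanSpace ℝ (Fin n))) (_ : B ∈ 𝔅) (_ : x ∈ B) (_ : 0 < μ B),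
    (∫⁻ y in B, ENNReal.ofReal |f y| ∂μ) / μ B

/-- A collection of sets is homothecy invariant if it is closed under translations and
positive dilations. -/
def HomothecyInvariant {n : ℕ} (𝔅 : Set (Set (EuclideanSpace ℝ (Fin n)))) : Prop :=
  ∀ B ∈ 𝔅, (∀ y : EuclideanSpace ℝ (Fin n), y +ᵥ B ∈ 𝔅) ∧ (∀ s : ℝ, 0 < s → s • B ∈ 𝔅)

/-- `μ` is doubling with respect to the collection `𝔅`, with constant `Δ`: whenever
`B ∈ 𝔅` and a translate of the dilate `2·B` contains `B`, its measure is at most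
`Δ·μ(B)`. -/
def DoublingWrt {n : ℕ} (μ : Measure (EuclideanSpace ℝ (Fin n)))
    (𝔅 : Set (Set (EuclideanSpace ℝ (Fin n)))) (Δ : ℝ) : Prop :=
  ∀ B ∈ 𝔅, ∀ σ : EuclideanSpace ℝ (Fin n),
    B ⊆ σ +ᵥ (2 : ℝ) • B → μ (σ +ᵥ (2 : ℝ) • B) ≤ ENNReal.ofReal Δ * μ B

/-- A member of a basis of convex sets: nonempty, bounded, open and convex. -/
def IsConvexBasisSet {n : ℕ} (B : Set (EuclideanSpace ℝ (Fin n))) : Prop :=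
  B.Nonempty ∧ Bornology.IsBounded B ∧ IsOpen B ∧ Convex ℝ B

/-- An open axis-parallel rectangle in `ℝⁿ`. -/
def IsAxisRect {n : ℕ} (R : Set (EuclideanSpace ℝ (Fin n))) : Prop :=
  ∃ a b : Fin n → ℝ, (∀ i, a i < b i) ∧ R = {x | ∀ i, x i ∈ Set.Ioo (a i) (b i)}

/-- An open rectangle (possibly rotated rectangular parallelepiped) in `ℝⁿ`:
the image of an open axis-parallel rectangle under a rigid motion. -/
def IsRect {n : ℕ} (R : Set (EuclideanSpace ℝ (Fin n))) : Prop :=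
  ∃ (f : EuclideanSpace ℝ (Fin n) ≃ᵢ EuclideanSpace ℝ (Fin n))
    (S : Set (EuclideanSpace ℝ (Fin n))), IsAxisRect S ∧ R = f '' S

/-- An open axis-parallel cube in `ℝⁿ`. -/
def IsAxisCube {n : ℕ} (C : Set (EuclideanSpace ℝ (Fin n))) : Prop :=
  ∃ (a : Fin n → ℝ) (s : ℝ), 0 < s ∧ C = {x | ∀ i, x i ∈ Set.Ioo (a i) (a i + s)}

/-- `M_{𝔅,μ}` is bounded on `L^p(ν)`. -/
def BoundedOnLp {n : ℕ} (μ ν : Measure (EuclideanSpace ℝ (Fin n)))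
    (𝔅 : Set (Set (EuclideanSpace ℝ (Fin n)))) (p : ℝ) : Prop :=
  ∃ C : ℝ≥0∞, C ≠ ⊤ ∧ ∀ f : EuclideanSpace ℝ (Fin n) → ℝ, Measurable f →
    ∫⁻ x, maxOp μ 𝔅 f x ^ p ∂ν ≤ C * ∫⁻ x, ENNReal.ofReal |f x| ^ p ∂ν

/-- The Tauberian condition for `M_{𝔅,μ}` at level `γ`, with constant `c`, with respect
to the measure `ν`. -/
def TauberianCond {n : ℕ} (μ ν : Measure (EuclideanSpace ℝ (Fin n)))
    (𝔅 : Set (Set (EuclideanSpace ℝ (Fin n)))) (γ c : ℝ) : Prop :=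
  ∀ E : Set (EuclideanSpace ℝ (Fin n)), MeasurableSet E →
    ν {x | ENNReal.ofReal γ < maxOp μ 𝔅 (E.indicator 1) x} ≤ ENNReal.ofReal c * ν E

/-- The standard open dyadic box of scale `2^k` and position `m` in `ℝⁿ`. -/
def stdBox (n : ℕ) (k : ℤ) (m : Fin n → ℤ) : Set (Fin n → ℝ) :=
  {x | ∀ i, (m i : ℝ) * 2 ^ k < x i ∧ x i < ((m i : ℝ) + 1) * 2 ^ k}

/-- A parametrization of a rectangular grid: a rigid motion composed with a positive
diagonal scaling. The image of the standard unit box under such a map is a rectangle. -/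
def IsRectParam {n : ℕ} (T : (Fin n → ℝ) → EuclideanSpace ℝ (Fin n)) : Prop :=
  ∃ (f : EuclideanSpace ℝ (Fin n) ≃ᵢ EuclideanSpace ℝ (Fin n)) (l : Fin n → ℝ),
    (∀ i, 0 < l i) ∧
    ∀ x, T x = f ((WithLp.equiv 2 (Fin n → ℝ)).symm (fun i => l i * x i))

/-- The dyadic mesh generated by a rectangle parametrized by `T`. -/
def dyadicMesh {n : ℕ} (T : (Fin n → ℝ) → EuclideanSpace ℝ (Fin n)) :
    Set (Set (EuclideanSpace ℝ (Fin n))) :=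
  {S | ∃ (k : ℤ) (m : Fin n → ℤ), S = T '' stdBox n k m}

/-- `S` is a dyadic descendant of the rectangle `R`, `s` generations inside `R`. -/
def DyadicDescendant {n : ℕ} (R S : Set (EuclideanSpace ℝ (Fin n))) (s : ℕ) : Prop :=
  ∃ T : (Fin n → ℝ) → EuclideanSpace ℝ (Fin n), IsRectParam T ∧
    T '' stdBox n 0 0 = R ∧
    ∃ m : Fin n → ℤ, (∀ i, 0 ≤ m i ∧ m i < 2 ^ s) ∧ S = T '' stdBox n (-(s : ℤ)) m

/-- The family of all homothetic copies (translates and positive dilates) of `R₀`. -/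
def homCopies {n : ℕ} (R₀ : Set (EuclideanSpace ℝ (Fin n))) :
    Set (Set (EuclideanSpace ℝ (Fin n))) :=
  {S | ∃ (y : EuclideanSpace ℝ (Fin n)) (s : ℝ), 0 < s ∧ S = y +ᵥ s • R₀}

/-- Iterated halo sets `H_β^k(E)`: `H_β^0(E) = E` and
`H_β^{k+1}(E) = {x : M_{𝔊,μ}(1_{H_β^k(E)})(x) ≥ β}`. -/
def Hiter {n : ℕ} (μ : Measure (EuclideanSpace ℝ (Fin n)))
    (𝔊 : Set (Set (EuclideanSpace ℝ (Fin n)))) (β : ℝ)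
    (E : Set (EuclideanSpace ℝ (Fin n))) : ℕ → Set (EuclideanSpace ℝ (Fin n))
  | 0 => E
  | k + 1 => {x | ENNReal.ofReal β ≤ maxOp μ 𝔊 ((Hiter μ 𝔊 β E k).indicator 1) x}

/-- The Muckenhoupt `A_{p,𝔅}` condition for a weight `w` (with respect to Lebesgue
measure); here `1 - p/(p-1) = 1 - p'`. -/
def MuckenhouptAp {n : ℕ} (𝔅 : Set (Set (EuclideanSpace ℝ (Fin n))))
    (w : EuclideanSpace ℝ (Fin n) → ℝ) (p : ℝ) : Prop :=
  ∃ C : ℝ≥0∞, C ≠ ⊤ ∧ ∀ B ∈ 𝔅,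
    ((∫⁻ x in B, ENNReal.ofReal (w x) ∂volume) / volume B) *
      (((∫⁻ x in B, ENNReal.ofReal (w x) ^ (1 - p / (p - 1)) ∂volume) / volume B) ^ (p - 1))
      ≤ C

/-- `𝔅` is a Muckenhoupt basis: for every `1 < p < ∞` and every weight `w ∈ A_{p,𝔅}`,
the maximal operator `M_𝔅` is bounded on `L^p(w)`. -/
def MuckenhouptBasis {n : ℕ} (𝔅 : Set (Set (EuclideanSpace ℝ (Fin n)))) : Prop :=
  ∀ p : ℝ, 1 < p → ∀ w : EuclideanSpace ℝ (Fin n) → ℝ, (∀ x, 0 ≤ w x) →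
    LocallyIntegrable w volume → MuckenhouptAp 𝔅 w p →
    BoundedOnLp volume (volume.withDensity fun x => ENNReal.ofReal (w x)) 𝔅 p

end


section helpers

theorem ruzsa_measure {n : ℕ} {X Y Z : Set (EuclideanSpace ℝ (Fin n))}
    (hX : IsOpen X) (hY : IsOpen Y) :
    volume (X - Z) * volume Y ≤ volume (X + Y) * volume (Y + Z) := by
  have hP : MeasurableSet (X + Y) := hX.add_right.measurableSet
  have hQ : MeasurableSet (Y + Z) := hY.add_right.measurableSet
  have hD : MeasurableSet (X - Z) := (hX.sub_right).measurableSet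
  let F : EuclideanSpace ℝ (Fin n) → EuclideanSpace ℝ (Fin n) → ℝ≥0∞ := fun d q =>
    (Y + Z).indicator 1 q * (X + Y).indicator 1 (q + d)
  have hF : Measurable (Function.uncurry F) := by
    apply Measurable.mul
    · exact (measurable_one.indicator hQ).comp measurable_snd
    · exact (measurable_one.indicator hP).comp (measurable_snd.add measurable_fst)
  have h1 : ∫⁻ d, ∫⁻ q, F d q = volume (X + Y) * volume (Y + Z) := by
    rw [lintegral_lintegral_swap hF.aemeasurable]
    have : ∀ q, ∫⁻ d, F d q = (Y + Z).indicator 1 q * volume (X + Y) := by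
      intro q
      simp only [F]
      have hm : Measurable fun d => ((X + Y).indicator 1 (q + d) : ℝ≥0∞) :=
        (measurable_one.indicator hP).comp (measurable_const_add q)
      rw [lintegral_const_mul _ hm,
        lintegral_add_left_eq_self (fun d => (X + Y).indicator 1 d) q, lintegral_indicator_one hP]
    simp_rw [this]
    rw [lintegral_mul_const _ (measurable_one.indicator hQ), lintegral_indicator_one hQ, mul_comm]
  rw [← h1]
  have h2 : volume (X - Z) * volume Y = ∫⁻ d in X - Z, volume Y := by
    rw [lintegral_const]; simp [mul_comm]
  rw [h2]
  refine (setLIntegral_mono' hD ?_).trans (setLIntegral_le_lintegral _ _)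
  rintro d ⟨x, hx, z, hz, rfl⟩
  have : volume Y = ∫⁻ q, (Y.indicator 1 (q - z) : ℝ≥0∞) := by
    rw [lintegral_sub_right_eq_self (fun q => (Y.indicator 1 q : ℝ≥0∞)) z,
      lintegral_indicator_one hY.measurableSet]
  rw [this]
  apply lintegral_mono
  intro q
  by_cases hq : q - z ∈ Y
  · have a1 : q ∈ Y + Z := ⟨q - z, hq, z, hz, by simp⟩
    have a2 : q + (x - z) ∈ X + Y := ⟨x, hx, q - z, hq, by simp only []; abel⟩
    simp [F, hq, a1, a2]
  · simp [hq]

theorem convex_bound {n : ℕ} {B : Set (EuclideanSpace ℝ (Fin n))}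
    (hB : IsConvexBasisSet B) :
    volume ((3:ℝ) • B - (2:ℝ) • B) ≤ 12 ^ n * volume B := by
  obtain ⟨hne, hbd, ho, hc⟩ := hB
  have h0 : volume B ≠ 0 := (ho.measure_pos volume hne).ne'
  have ht : volume B ≠ ⊤ := hbd.measure_lt_top.ne
  have := ruzsa_measure (X := (3:ℝ) • B) (Y := B) (Z := (2:ℝ) • B)
    (ho.smul₀ (by norm_num)) ho
  have e1 : (3:ℝ) • B + B = (4:ℝ) • B := by
    have := hc.add_smul (p := 3) (q := 1) (by norm_num) (by norm_num)
    rw [one_smul] at this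
    rw [← this]; norm_num
  have e2 : B + (2:ℝ) • B = (3:ℝ) • B := by
    have := hc.add_smul (p := 1) (q := 2) (by norm_num) (by norm_num)
    rw [one_smul] at this
    rw [← this]; norm_num
  rw [e1, e2, Measure.addHaar_smul, Measure.addHaar_smul] at this
  simp only [finrank_euclideanSpace_fin] at this
  rw [← ENNReal.mul_le_mul_iff_left h0 ht]
  refine this.trans (le_of_eq ?_)
  rw [abs_of_pos (by positivity), abs_of_pos (by positivity), ENNReal.ofReal_pow (by norm_num),
    ENNReal.ofReal_pow (by norm_num)]
  rw [show (12:ℝ≥0∞) = ENNReal.ofReal 4 * ENNReal.ofReal 3 by norm_num, mul_pow]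
  ring

theorem enlarge {n : ℕ} {B : Set (EuclideanSpace ℝ (Fin n))} (hc : Convex ℝ B)
    {u v : EuclideanSpace ℝ (Fin n)} {s t : ℝ} (hs : 0 < s) (ht : 0 < t) (hst : s ≤ 2 * t)
    (h : ((v +ᵥ s • B) ∩ (u +ᵥ t • B)).Nonempty) :
    v +ᵥ s • B ⊆ u +ᵥ t • ((3:ℝ) • B - (2:ℝ) • B) := by
  obtain ⟨p, ⟨-, ⟨b2, hb2, rfl⟩, hp2⟩, ⟨-, ⟨b3, hb3, rfl⟩, hp3⟩⟩ := h
  rintro - ⟨-, ⟨b1, hb1, rfl⟩, rfl⟩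
  simp only [vadd_eq_add] at *
  have m1 : (s/(2*t)) • b2 + (1 - s/(2*t)) • b1 ∈ B :=
    hc hb2 hb1 (by positivity)
      (by rw [sub_nonneg, div_le_one (by positivity)]; exact hst) (by ring)
  have m2 : (1/3:ℝ) • b3 + (2/3:ℝ) • b1 ∈ B :=
    hc hb3 hb1 (by positivity) (by positivity) (by ring)
  refine ⟨_, ⟨_, ⟨_, ⟨_, m2, rfl⟩, _, ⟨_, m1, rfl⟩, rfl⟩, rfl⟩, ?_⟩
  simp only [vadd_eq_add]
  have : v = u + t • b3 - s • b2 := by rw [hp3, ← hp2]; abel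
  rw [this]
  ext i
  simp
  field_simp
  ring

/-- Superlevel set of the maximal function of an indicator. -/
def halo {n : ℕ} (𝔅 : Set (Set (EuclideanSpace ℝ (Fin n)))) (g : ℝ≥0∞)
    (E : Set (EuclideanSpace ℝ (Fin n))) : Set (EuclideanSpace ℝ (Fin n)) :=
  {x | ∃ S ∈ 𝔅, x ∈ S ∧ g * volume S < volume (E ∩ S)}

/-- Homothetic copy of `B` with center `x` and ratio `r`. -/
def hcp {n : ℕ} (B : Set (EuclideanSpace ℝ (Fin n))) (x : EuclideanSpace ℝ (Fin n)) (r : ℝ) :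
    Set (EuclideanSpace ℝ (Fin n)) := (x - r • x) +ᵥ r • B

theorem hcp_mono {n : ℕ} {B : Set (EuclideanSpace ℝ (Fin n))} (hc : Convex ℝ B)
    {x : EuclideanSpace ℝ (Fin n)} (hx : x ∈ B) {r s : ℝ} (hr : 0 < r) (hrs : r ≤ s) :
    hcp B x r ⊆ hcp B x s := by
  rintro - ⟨-, ⟨b, hb, rfl⟩, rfl⟩
  have hs : 0 < s := hr.trans_le hrs
  have m1 : (r/s) • b + (1 - r/s) • x ∈ B :=
    hc hb hx (by positivity)
      (by rw [sub_nonneg, div_le_one (by positivity)]; exact hrs) (by ring)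
  refine ⟨_, ⟨_, m1, rfl⟩, ?_⟩
  ext i
  simp
  field_simp
  ring

theorem hcp_one {n : ℕ} (B : Set (EuclideanSpace ℝ (Fin n)))
    (x : EuclideanSpace ℝ (Fin n)) : hcp B x 1 = B := by
  simp [hcp]

theorem mem_hcp {n : ℕ} {B : Set (EuclideanSpace ℝ (Fin n))}
    {x : EuclideanSpace ℝ (Fin n)} (hx : x ∈ B) (r : ℝ) : x ∈ hcp B x r :=
  ⟨_, ⟨x, hx, rfl⟩, by simp⟩

theorem volume_hcp {n : ℕ} (B : Set (EuclideanSpace ℝ (Fin n)))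
    (x : EuclideanSpace ℝ (Fin n)) {r : ℝ} (hr : 0 < r) :
    volume (hcp B x r) = ENNReal.ofReal r ^ n * volume B := by
  rw [hcp, measure_vadd, Measure.addHaar_smul, finrank_euclideanSpace_fin,
    abs_of_pos (by positivity), ENNReal.ofReal_pow hr.le]

theorem hcp_mem {n : ℕ} {𝔅 : Set (Set (EuclideanSpace ℝ (Fin n)))}
    (hhom : HomothecyInvariant 𝔅) {B : Set (EuclideanSpace ℝ (Fin n))} (hB : B ∈ 𝔅)
    (x : EuclideanSpace ℝ (Fin n)) {r : ℝ} (hr : 0 < r) : hcp B x r ∈ 𝔅 :=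
  (hhom _ ((hhom _ hB).2 r hr)).1 _

theorem exists_scale {n : ℕ} {B E : Set (EuclideanSpace ℝ (Fin n))}
    (hB : IsConvexBasisSet B) (g g' : ℝ≥0∞) (l : ℝ) (hl : 1 < l)
    (hg' : g' < 1) (hgl : g * ENNReal.ofReal l ^ n ≤ g')
    (hd : volume (E ∩ B) ≤ g' * volume B) {x : EuclideanSpace ℝ (Fin n)} (hxB : x ∈ B)
    (hx : Tendsto (fun r => volume (E ∩ Metric.closedBall x r) /
      volume (Metric.closedBall x r)) (𝓝[>] 0) (𝓝 1)) :
    ∃ r : ℝ, 0 < r ∧ r ≤ 1 ∧ g * volume (hcp B x r) < volume (E ∩ hcp B x r) ∧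
      volume (E ∩ hcp B x r) ≤ g' * volume (hcp B x r) := by
  obtain ⟨hne, hbd, ho, hc⟩ := hB
  have h0 : volume B ≠ 0 := (ho.measure_pos volume hne).ne'
  have ht : volume B ≠ ⊤ := hbd.measure_lt_top.ne
  have hl0 : 0 < l := by linarith
  have key := Measure.tendsto_addHaar_inter_smul_one_of_density_one volume E x hx (-x +ᵥ B)
    (ho.measurableSet.const_vadd _) (by rwa [measure_vadd]) (by rwa [measure_vadd])
  have heq : ∀ r : ℝ, ({x} + r • (-x +ᵥ B) : Set (EuclideanSpace ℝ (Fin n))) = hcp B x r := by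
    intro r
    ext y
    simp only [hcp, Set.singleton_add, Set.mem_image, Set.mem_smul_set, Set.mem_vadd_set,
      vadd_eq_add]
    constructor
    · rintro ⟨-, ⟨-, ⟨b, hb, rfl⟩, rfl⟩, rfl⟩
      exact ⟨r • b, ⟨b, hb, rfl⟩, by simp only [smul_add, smul_neg]; abel⟩
    · rintro ⟨-, ⟨b, hb, rfl⟩, rfl⟩
      exact ⟨_, ⟨_, ⟨b, hb, rfl⟩, rfl⟩, by simp only [smul_add, smul_neg]; abel⟩
  simp_rw [heq] at key
  have hseq : Tendsto (fun k : ℕ => (l⁻¹) ^ k) atTop (𝓝[>] 0) := by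
    rw [tendsto_nhdsWithin_iff]
    refine ⟨tendsto_pow_atTop_nhds_zero_of_lt_one (by positivity) (inv_lt_one_of_one_lt₀ hl), ?_⟩
    filter_upwards with k
    exact pow_pos (inv_pos.2 hl0) k
  have ev := (key.comp hseq).eventually (lt_mem_nhds hg')
  have hex : ∃ k : ℕ, g' * volume (hcp B x ((l⁻¹) ^ k)) < volume (E ∩ hcp B x ((l⁻¹) ^ k)) := by
    obtain ⟨k, hk⟩ := ev.exists
    refine ⟨k, ?_⟩
    have hp : 0 < (l⁻¹) ^ k := by positivity
    simp only [Function.comp] at hk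
    rwa [ENNReal.lt_div_iff_mul_lt] at hk
    · left; rw [volume_hcp _ _ hp]
      refine mul_ne_zero (pow_ne_zero _ ?_) h0
      simpa using hp
    · left; rw [volume_hcp _ _ hp]
      finiteness
  classical
  have hk := Nat.find_spec hex
  have hmin := fun m => Nat.find_min hex (m := m)
  generalize Nat.find hex = k at hk hmin
  cases k with
  | zero =>
    simp only [pow_zero, hcp_one] at hk
    exact absurd hk (not_lt.2 hd)
  | succ k =>
    have hp : 0 < (l⁻¹) ^ k := by positivity
    have hp1 : 0 < (l⁻¹) ^ (k+1) := by positivity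
    refine ⟨(l⁻¹) ^ k, hp, pow_le_one₀ (by positivity) (inv_le_one_of_one_le₀ hl.le), ?_,
      not_lt.1 (hmin k (Nat.lt_succ_self k))⟩
    have hsub : hcp B x ((l⁻¹) ^ (k+1)) ⊆ hcp B x ((l⁻¹) ^ k) :=
      hcp_mono hc hxB hp1 (pow_le_pow_of_le_one (by positivity)
        (inv_le_one_of_one_le₀ hl.le) (Nat.le_succ k))
    refine lt_of_le_of_lt ?_ (hk.trans_le (measure_mono (inter_subset_inter_right _ hsub)))
    rw [volume_hcp _ _ hp, volume_hcp _ _ hp1]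
    have e : ENNReal.ofReal ((l⁻¹) ^ k) = ENNReal.ofReal l * ENNReal.ofReal ((l⁻¹) ^ (k+1)) := by
      rw [← ENNReal.ofReal_mul hl0.le]
      congr 1
      rw [pow_succ]
      field_simp
    rw [e, mul_pow]
    calc _ = (g * ENNReal.ofReal l ^ n) * (ENNReal.ofReal ((l⁻¹) ^ (k+1)) ^ n * volume B) := by ring
      _ ≤ _ := by gcongr

theorem gain {n : ℕ} {𝔅 : Set (Set (EuclideanSpace ℝ (Fin n)))}
    (hB : ∀ B ∈ 𝔅, IsConvexBasisSet B) (hhom : HomothecyInvariant 𝔅)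
    (g g' : ℝ≥0∞) (l : ℝ) (hl : 1 < l)
    (hg' : g' < 1) (hgl : g * ENNReal.ofReal l ^ n ≤ g')
    {B E : Set (EuclideanSpace ℝ (Fin n))} (hBm : B ∈ 𝔅) (hE : MeasurableSet E)
    (hd : volume (E ∩ B) ≤ g' * volume B) :
    (1 + (1 - g') / 12 ^ n) * volume (E ∩ B) ≤ volume ((E ∪ halo 𝔅 g E) ∩ B) := by
  have hBB := hB B hBm
  obtain ⟨hne, hbd, ho, hc⟩ := hB B hBm
  have h0 : volume B ≠ 0 := (ho.measure_pos volume hne).ne'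
  have ht : volume B ≠ ⊤ := hbd.measure_lt_top.ne
  let G : Set (EuclideanSpace ℝ (Fin n)) := {x | x ∈ E ∩ B ∧ ∃ r : ℝ, 0 < r ∧ r ≤ 1 ∧
    g * volume (hcp B x r) < volume (E ∩ hcp B x r) ∧
      volume (E ∩ hcp B x r) ≤ g' * volume (hcp B x r)}
  have hGae : volume (E ∩ B) ≤ volume G := by
    apply measure_mono_ae
    filter_upwards [Besicovitch.ae_tendsto_measure_inter_div_of_measurableSet volume hE] with x hx hm
    rw [Set.indicator_of_mem hm.1] at hx
    exact ⟨hm, exists_scale hBB g g' l hl hg' hgl hd hm.2 hx⟩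
  have hr : ∀ x, ∃ r : ℝ, x ∈ G → (0 < r ∧ r ≤ 1 ∧
    g * volume (hcp B x r) < volume (E ∩ hcp B x r) ∧
      volume (E ∩ hcp B x r) ≤ g' * volume (hcp B x r)) := by
    intro x
    by_cases hx : x ∈ G
    · obtain ⟨r, h⟩ := hx.2
      exact ⟨r, fun _ => h⟩
    · exact ⟨0, fun h => absurd h hx⟩
  choose r hr using hr
  obtain ⟨u, huG, hdisj, hcov⟩ := Vitali.exists_disjoint_subfamily_covering_enlargement
    (fun x => hcp B x (r x)) G r 2 (by norm_num) (fun a ha => (hr a ha).1.le) 1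
    (fun a ha => (hr a ha).2.1) (fun a ha => ⟨a, mem_hcp ha.1.2 _⟩)
  have hopen : ∀ i ∈ u, IsOpen (hcp B i (r i)) := fun i hi =>
    (hB _ (hcp_mem hhom hBm i (hr i (huG hi)).1)).2.2.1
  have hcnt : u.Countable := hdisj.countable_of_isOpen hopen
    (fun i hi => ⟨i, mem_hcp (huG hi).1.2 _⟩)
  have h1 : volume (E ∩ B) ≤ 12 ^ n * ∑' i : u, volume (hcp B i (r i)) := by
    refine hGae.trans ?_
    have hsub : G ⊆ ⋃ i ∈ u, ((i - r i • i) +ᵥ r i • ((3:ℝ) • B - (2:ℝ) • B)) := by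
      intro a ha
      obtain ⟨b, hb, hint, hle⟩ := hcov a ha
      exact mem_biUnion hb (enlarge hc (hr a ha).1 (hr b (huG hb)).1 hle hint (mem_hcp ha.1.2 _))
    refine (measure_mono hsub).trans ((measure_biUnion_le volume hcnt _).trans ?_)
    rw [← ENNReal.tsum_mul_left]
    refine ENNReal.tsum_le_tsum fun i => ?_
    have hri := (hr i (huG i.2)).1
    rw [measure_vadd, Measure.addHaar_smul, volume_hcp _ _ hri, finrank_euclideanSpace_fin,
      abs_of_pos (by positivity), ENNReal.ofReal_pow hri.le]
    calc _ ≤ ENNReal.ofReal (r i) ^ n * (12 ^ n * volume B) := by gcongr; exact convex_bound hBB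
      _ = _ := by ring
  have h2 : (1 - g') * ∑' i : u, volume (hcp B i (r i)) ≤
      volume ((⋃ i ∈ u, hcp B i (r i)) \ E) := by
    simp_rw [iUnion_sdiff]
    rw [measure_biUnion hcnt (hdisj.mono (fun i => sdiff_subset))
      (fun i hi => (hopen i hi).measurableSet.diff hE), ← ENNReal.tsum_mul_left]
    refine ENNReal.tsum_le_tsum fun i => ?_
    have hi := hr i (huG i.2)
    have hfin : volume (hcp B i (r i)) ≠ ⊤ := by
      rw [volume_hcp _ _ hi.1]; finiteness
    rw [ENNReal.sub_mul (fun _ _ => hfin), one_mul]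
    refine (tsub_le_tsub_left hi.2.2.2 _).trans ?_
    rw [tsub_le_iff_right, inter_comm, measure_sdiff_add_inter _ hE]
  have h3 : volume (E ∩ B) + volume ((⋃ i ∈ u, hcp B i (r i)) \ E) ≤
      volume ((E ∪ halo 𝔅 g E) ∩ B) := by
    rw [← measure_union' (by
      rw [Set.disjoint_left]; exact fun x hx hx' => hx'.2 hx.1) (hE.inter ho.measurableSet)]
    apply measure_mono
    rintro x (hx | ⟨hx, -⟩)
    · exact ⟨Or.inl hx.1, hx.2⟩
    · rw [mem_iUnion₂] at hx
      obtain ⟨i, hi, hxi⟩ := hx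
      have hii := hr i (huG hi)
      refine ⟨Or.inr ⟨_, hcp_mem hhom hBm i hii.1, hxi, hii.2.2.1⟩, ?_⟩
      rw [← hcp_one B i]
      exact hcp_mono hc (huG hi).1.2 hii.1 hii.2.1 hxi
  refine le_trans ?_ h3
  rw [add_mul, one_mul]
  gcongr
  refine le_trans ?_ h2
  calc (1 - g') / 12 ^ n * volume (E ∩ B) ≤
      (1 - g') / 12 ^ n * (12 ^ n * ∑' i : u, volume (hcp B i (r i))) := by gcongr
    _ = (1 - g') * ∑' i : u, volume (hcp B i (r i)) := by
      rw [← mul_assoc, ENNReal.div_mul_cancel (by positivity) (by finiteness)]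

theorem halo_isOpen {n : ℕ} {𝔅 : Set (Set (EuclideanSpace ℝ (Fin n)))}
    (hB : ∀ B ∈ 𝔅, IsConvexBasisSet B) (g : ℝ≥0∞) (E : Set (EuclideanSpace ℝ (Fin n))) :
    IsOpen (halo 𝔅 g E) := by
  rw [isOpen_iff_mem_nhds]
  rintro x ⟨S, hS, hx, h⟩
  exact mem_of_superset ((hB S hS).2.2.1.mem_nhds hx) fun y hy => ⟨S, hS, hy, h⟩

theorem lt_maxOp_iff {n : ℕ} {𝔅 : Set (Set (EuclideanSpace ℝ (Fin n)))}
    (hB : ∀ B ∈ 𝔅, IsConvexBasisSet B) (a : ℝ≥0∞) (f : EuclideanSpace ℝ (Fin n) → ℝ)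
    (x : EuclideanSpace ℝ (Fin n)) :
    a < maxOp volume 𝔅 f x ↔ ∃ S ∈ 𝔅, x ∈ S ∧
      a * volume S < ∫⁻ y in S, ENNReal.ofReal |f y| := by
  simp only [maxOp, lt_iSup_iff]
  constructor
  · rintro ⟨S, hS, hx, h0, h⟩
    refine ⟨S, hS, hx, ?_⟩
    rwa [ENNReal.lt_div_iff_mul_lt (Or.inl h0.ne') (Or.inl (hB S hS).2.1.measure_lt_top.ne)] at h
  · rintro ⟨S, hS, hx, h⟩
    have h0 : 0 < volume S := (hB S hS).2.2.1.measure_pos volume (hB S hS).1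
    refine ⟨S, hS, hx, h0, ?_⟩
    rwa [ENNReal.lt_div_iff_mul_lt (Or.inl h0.ne') (Or.inl (hB S hS).2.1.measure_lt_top.ne)]

theorem setOf_lt_maxOp_indicator {n : ℕ} {𝔅 : Set (Set (EuclideanSpace ℝ (Fin n)))}
    (hB : ∀ B ∈ 𝔅, IsConvexBasisSet B) (a : ℝ≥0∞) {E : Set (EuclideanSpace ℝ (Fin n))}
    (hE : MeasurableSet E) :
    {x | a < maxOp volume 𝔅 (E.indicator 1) x} = halo 𝔅 a E := by
  ext x
  rw [mem_ofPred_eq, lt_maxOp_iff hB]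
  have : ∀ S : Set (EuclideanSpace ℝ (Fin n)),
      ∫⁻ y in S, ENNReal.ofReal |E.indicator (1 : EuclideanSpace ℝ (Fin n) → ℝ) y|
        = volume (E ∩ S) := by
    intro S
    rw [← Measure.restrict_apply hE, ← lintegral_indicator_one hE]
    congr 1
    ext y
    by_cases hy : y ∈ E <;> simp [hy]
  simp_rw [this]
  rfl

/-- Iterated halos. -/
def itHalo {n : ℕ} (𝔅 : Set (Set (EuclideanSpace ℝ (Fin n)))) (g : ℝ≥0∞)
    (E : Set (EuclideanSpace ℝ (Fin n))) : ℕ → Set (EuclideanSpace ℝ (Fin n))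
  | 0 => E
  | k + 1 => itHalo 𝔅 g E k ∪ halo 𝔅 g (itHalo 𝔅 g E k)

theorem itHalo_measurable {n : ℕ} {𝔅 : Set (Set (EuclideanSpace ℝ (Fin n)))}
    (hB : ∀ B ∈ 𝔅, IsConvexBasisSet B) (g : ℝ≥0∞) {E : Set (EuclideanSpace ℝ (Fin n))}
    (hE : MeasurableSet E) (k : ℕ) : MeasurableSet (itHalo 𝔅 g E k) := by
  induction k with
  | zero => exact hE
  | succ k ih => exact ih.union (halo_isOpen hB _ _).measurableSet

theorem itHalo_measure {n : ℕ} {𝔅 : Set (Set (EuclideanSpace ℝ (Fin n)))}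
    (hB : ∀ B ∈ 𝔅, IsConvexBasisSet B) (ν : Measure (EuclideanSpace ℝ (Fin n))) (g c : ℝ≥0∞)
    (hT : ∀ E, MeasurableSet E → ν (halo 𝔅 g E) ≤ c * ν E)
    {E : Set (EuclideanSpace ℝ (Fin n))}
    (hE : MeasurableSet E) (k : ℕ) : ν (itHalo 𝔅 g E k) ≤ (1 + c) ^ k * ν E := by
  induction k with
  | zero => simp [itHalo]
  | succ k ih =>
    calc ν (itHalo 𝔅 g E (k+1)) ≤ ν (itHalo 𝔅 g E k) + c * ν (itHalo 𝔅 g E k) :=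
          (measure_union_le _ _).trans (by gcongr; exact hT _ (itHalo_measurable hB g hE k))
      _ = (1 + c) * ν (itHalo 𝔅 g E k) := by ring
      _ ≤ (1 + c) * ((1 + c) ^ k * ν E) := by gcongr
      _ = _ := by ring

theorem halo_subset_itHalo {n : ℕ} {𝔅 : Set (Set (EuclideanSpace ℝ (Fin n)))}
    (hB : ∀ B ∈ 𝔅, IsConvexBasisSet B) (hhom : HomothecyInvariant 𝔅)
    (g g' : ℝ≥0∞) (l : ℝ) (hl : 1 < l)
    (hg' : g' < 1) (hgl : g * ENNReal.ofReal l ^ n ≤ g')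
    {E : Set (EuclideanSpace ℝ (Fin n))} (hE : MeasurableSet E)
    (k : ℕ) (α : ℝ≥0∞) (hα : 1 ≤ (1 + (1 - g') / 12 ^ n) ^ k * α) :
    halo 𝔅 α E ⊆ itHalo 𝔅 g E k := by
  rintro x ⟨B, hBm, hxB, hαB⟩
  set η : ℝ≥0∞ := 1 + (1 - g') / 12 ^ n with hη
  have hηt : η ≠ ⊤ := by
    rw [hη]
    refine ENNReal.add_ne_top.2 ⟨by simp, ENNReal.div_ne_top (by finiteness) (by positivity)⟩
  have hη0 : η ≠ 0 := by rw [hη]; positivity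
  have hgg : g ≤ g' := by
    refine le_trans ?_ hgl
    have : (1:ℝ≥0∞) ≤ ENNReal.ofReal l ^ n := one_le_pow₀ (by simpa using hl.le)
    calc g = g * 1 := by simp
      _ ≤ _ := by gcongr
  have P : ∀ k, B ⊆ itHalo 𝔅 g E k ∨ η ^ k * volume (E ∩ B) ≤ volume (itHalo 𝔅 g E k ∩ B) := by
    intro k
    induction k with
    | zero => right; simp [itHalo]
    | succ k ih =>
      rcases ih with ih | ih
      · left; exact ih.trans subset_union_left
      · rcases le_or_gt (volume (itHalo 𝔅 g E k ∩ B)) (g' * volume B) with h | h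
        · right
          have := gain hB hhom g g' l hl hg' hgl hBm (itHalo_measurable hB g hE k) h
          refine le_trans ?_ this
          rw [pow_succ', mul_assoc]
          gcongr
        · left
          intro y hy
          refine Or.inr ⟨B, hBm, hy, lt_of_le_of_lt ?_ h⟩
          gcongr
  rcases P k with h | h
  · exact h hxB
  · exfalso
    have : volume B < volume B := by
      calc volume B = 1 * volume B := by simp
        _ ≤ η ^ k * α * volume B := by gcongr
        _ = η ^ k * (α * volume B) := by ring
        _ < η ^ k * volume (E ∩ B) := by
            rw [ENNReal.mul_lt_mul_iff_right (by positivity) (by finiteness)]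
            exact hαB
        _ ≤ _ := h
        _ ≤ volume B := measure_mono inter_subset_right
    exact lt_irrefl _ this

theorem exists_pow_ge {a b : ℝ≥0∞} (ha : 1 < a) (hb : b ≠ ⊤) : ∃ N : ℕ, b ≤ a ^ N := by
  by_cases hat : a = ⊤
  · exact ⟨1, by simp [hat]⟩
  lift a to NNReal using hat
  lift b to NNReal using hb
  obtain ⟨N, hN⟩ := pow_unbounded_of_one_lt b (y := a) (by exact_mod_cast ha)
  exact ⟨N, by exact_mod_cast hN.le⟩

theorem tauberian_all {n : ℕ} {𝔅 : Set (Set (EuclideanSpace ℝ (Fin n)))}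
    (hB : ∀ B ∈ 𝔅, IsConvexBasisSet B) (hhom : HomothecyInvariant 𝔅)
    (ν : Measure (EuclideanSpace ℝ (Fin n))) (γ c : ℝ) (hγ : γ ∈ Set.Ioo (0:ℝ) 1)
    (hT : TauberianCond volume ν 𝔅 γ c) :
    ∃ Q : ℝ≥0∞, Q ≠ ⊤ ∧ ∀ (m : ℕ) (E : Set (EuclideanSpace ℝ (Fin n))), MeasurableSet E →
      ν (halo 𝔅 ((4 ^ (m+1))⁻¹) E) ≤ Q ^ (m+1) * ν E := by
  obtain ⟨γ', h1, h2⟩ := exists_between hγ.2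
  obtain ⟨l, hl, hgl⟩ : ∃ l : ℝ, 1 < l ∧ γ * l ^ n < γ' := by
    have hc : Continuous fun l : ℝ => γ * l ^ n := by fun_prop
    have : Tendsto (fun l : ℝ => γ * l ^ n) (𝓝[>] 1) (𝓝 (γ * 1 ^ n)) :=
      (hc.tendsto 1).mono_left nhdsWithin_le_nhds
    have ev := this.eventually (gt_mem_nhds (by simpa using h1))
    obtain ⟨l, h, h'⟩ := (ev.and self_mem_nhdsWithin).exists
    exact ⟨l, h', h⟩
  have hγ'0 : 0 < γ' := hγ.1.trans h1
  have hg' : ENNReal.ofReal γ' < 1 := by simpa using h2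
  have hgl' : ENNReal.ofReal γ * ENNReal.ofReal l ^ n ≤ ENNReal.ofReal γ' := by
    rw [← ENNReal.ofReal_pow (by linarith), ← ENNReal.ofReal_mul hγ.1.le]
    exact ENNReal.ofReal_le_ofReal hgl.le
  have hη : 1 < 1 + (1 - ENNReal.ofReal γ') / 12 ^ n := by
    apply ENNReal.lt_add_right (by simp)
    exact (ENNReal.div_pos (tsub_pos_of_lt hg').ne' (by finiteness)).ne'
  obtain ⟨N, hN⟩ := exists_pow_ge hη (b := 4) (by simp)
  refine ⟨(1 + ENNReal.ofReal c) ^ N, by finiteness, fun m E hE => ?_⟩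
  rw [← pow_mul]
  refine (measure_mono (halo_subset_itHalo hB hhom (ENNReal.ofReal γ) (ENNReal.ofReal γ') l hl hg'
    hgl' hE (N * (m+1)) _ ?_)).trans (itHalo_measure hB ν _ _ (fun E hE => ?_) hE _)
  · rw [pow_mul]
    calc (1:ℝ≥0∞) = 4 ^ (m+1) * (4 ^ (m+1))⁻¹ :=
          (ENNReal.mul_inv_cancel (by positivity) (by finiteness)).symm
      _ ≤ _ := by gcongr
  · rw [← setOf_lt_maxOp_indicator hB _ hE]
    exact hT E hE

/-- Dyadic shells. -/
def shell {X : Type*} (f : X → ℝ) (i : ℤ) : Set X :=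
  {x | ENNReal.ofReal |f x| ∈ Set.Ioc ((2:ℝ≥0∞) ^ i) (2 ^ (i+1))}

theorem zpow_two_lt {i j : ℤ} (h : (2:ℝ≥0∞) ^ i < 2 ^ j) : i < j := by
  by_contra hh
  exact absurd h (not_lt.2 (ENNReal.zpow_le_of_le (by norm_num) (not_lt.1 hh)))

theorem shell_bound {X : Type*} (f : X → ℝ) (j : ℤ) (x : X) :
    ENNReal.ofReal |f x| ≤ 2 ^ j + ∑' m : ℕ, (2:ℝ≥0∞) ^ (j + m + 1) *
      (shell f (j+m)).indicator 1 x := by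
  rcases le_or_gt (ENNReal.ofReal |f x|) (2 ^ j) with h | h
  · exact h.trans le_self_add
  · obtain ⟨i, hi⟩ := ENNReal.exists_mem_Ioc_zpow (x := ENNReal.ofReal |f x|) (y := 2)
      (ne_bot_of_gt h) (by simp) (by norm_num) (by simp)
    have hji : j < i + 1 := zpow_two_lt (h.trans_le hi.2)
    obtain ⟨m, hm⟩ := Int.eq_ofNat_of_zero_le (show 0 ≤ i - j by omega)
    have hm' : i = j + m := by omega
    refine le_trans ?_ (le_add_of_nonneg_left zero_le)
    refine le_trans ?_ (ENNReal.le_tsum m)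
    have : x ∈ shell f (j + m) := by rw [← hm']; exact hi
    rw [Set.indicator_of_mem this, ← hm']
    simpa using hi.2

theorem shell_measurable {n : ℕ} {f : EuclideanSpace ℝ (Fin n) → ℝ} (hf : Measurable f) (i : ℤ) :
    MeasurableSet (shell f i) :=
  (ENNReal.measurable_ofReal.comp hf.abs) measurableSet_Ioc

theorem maxOp_superlevel {n : ℕ} {𝔅 : Set (Set (EuclideanSpace ℝ (Fin n)))}
    (hB : ∀ B ∈ 𝔅, IsConvexBasisSet B) {f : EuclideanSpace ℝ (Fin n) → ℝ} (hf : Measurable f)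
    (j : ℤ) : {x | 2 ^ (j+1) < maxOp volume 𝔅 f x} ⊆
      ⋃ m : ℕ, halo 𝔅 ((4 ^ (m+1))⁻¹) (shell f (j+m)) := by
  intro x hx
  rw [mem_ofPred_eq, lt_maxOp_iff hB] at hx
  obtain ⟨S, hS, hxS, h⟩ := hx
  by_contra hcon
  simp only [mem_iUnion, halo, mem_ofPred_eq, not_exists, not_and, not_lt] at hcon
  refine absurd h (not_lt.2 ?_)
  have hms := shell_measurable hf
  calc ∫⁻ y in S, ENNReal.ofReal |f y|
      ≤ ∫⁻ y in S, (2 ^ j + ∑' m : ℕ, (2:ℝ≥0∞) ^ (j + m + 1) *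
          (shell f (j+m)).indicator 1 y) := lintegral_mono fun y => shell_bound f j y
    _ = 2 ^ j * volume S + ∑' m : ℕ, (2:ℝ≥0∞) ^ (j + m + 1) * volume (shell f (j+m) ∩ S) := by
      rw [lintegral_add_left measurable_const, lintegral_tsum]
      · congr 1
        · simp
        · congr 1
          ext m
          rw [lintegral_const_mul _ (measurable_one.indicator (hms _)),
            lintegral_indicator_one (hms _), Measure.restrict_apply (hms _)]
      · intro m
        exact ((measurable_one.indicator (hms _)).const_mul _).aemeasurable
    _ ≤ 2 ^ j * volume S + ∑' m : ℕ, (2:ℝ≥0∞) ^ (j + m + 1) * ((4 ^ (m+1))⁻¹ * volume S) := by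
      gcongr with m
      exact hcon m S hS hxS
    _ = 2 ^ j * volume S + ∑' m : ℕ, (2 ^ j * volume S) * (2⁻¹ : ℝ≥0∞) ^ (m + 1) := by
      congr 2
      ext m
      have e1 : (2:ℝ≥0∞) ^ (j + m + 1) = 2 ^ j * 2 ^ (m+1) := by
        rw [add_assoc, ENNReal.zpow_add (by norm_num) (by norm_num)]
        congr 1
        exact_mod_cast zpow_natCast (2:ℝ≥0∞) (m+1)
      have e2 : (2:ℝ≥0∞) ^ (m+1) * (4 ^ (m+1))⁻¹ = (2⁻¹ : ℝ≥0∞) ^ (m + 1) := by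
        rw [show (4:ℝ≥0∞) = 2 * 2 by norm_num, mul_pow, ENNReal.mul_inv (by simp) (by simp),
          ← mul_assoc, ENNReal.mul_inv_cancel (by simp) (by finiteness), one_mul, ENNReal.inv_pow]
      rw [e1, ← e2]; ring
    _ = 2 ^ (j+1) * volume S := by
      rw [ENNReal.tsum_mul_left, ENNReal.tsum_geometric_add_one, ENNReal.zpow_add (by norm_num) (by norm_num)]
      have : (2⁻¹ : ℝ≥0∞) * (1 - 2⁻¹)⁻¹ = 1 := by
        rw [ENNReal.one_sub_inv_two, inv_inv, ENNReal.inv_mul_cancel (by simp) (by simp)]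
      rw [this, zpow_one]; ring

theorem rpow_le_tsum (a : ℝ≥0∞) {p : ℝ} (hp : 0 < p) :
    a ^ p ≤ ∑' j : ℤ, ((2:ℝ≥0∞) ^ (j+2)) ^ p * (Set.Ioi ((2:ℝ≥0∞) ^ (j+1))).indicator 1 a := by
  have main : ∀ b : ℝ≥0∞, b ≠ ⊤ → b ≤ a → b ^ p ≤ ∑' j : ℤ, ((2:ℝ≥0∞) ^ (j+2)) ^ p *
      (Set.Ioi ((2:ℝ≥0∞) ^ (j+1))).indicator 1 a := by
    intro b hb hba
    rcases eq_or_ne b 0 with rfl | h0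
    · simp [hp]
    obtain ⟨i, hi⟩ := ENNReal.exists_mem_Ioc_zpow (x := b) (y := 2) h0 hb (by norm_num) (by simp)
    refine le_trans ?_ (ENNReal.le_tsum (i - 1))
    have hm : a ∈ Set.Ioi ((2:ℝ≥0∞) ^ (i - 1 + 1)) := by
      rw [sub_add_cancel]; exact hi.1.trans_le hba
    rw [Set.indicator_of_mem hm, show i - 1 + 2 = i + 1 by ring]
    simp only [Pi.one_apply, mul_one]
    exact ENNReal.rpow_le_rpow hi.2 hp.le
  by_cases ha : a = ⊤
  · have hT : ∀ b : ℝ≥0∞, b ≠ ⊤ → b ≤ ∑' j : ℤ, ((2:ℝ≥0∞) ^ (j+2)) ^ p *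
        (Set.Ioi ((2:ℝ≥0∞) ^ (j+1))).indicator 1 a := by
      intro b hb
      have := main (b ^ p⁻¹) (ENNReal.rpow_ne_top_of_nonneg (by positivity) hb) (by simp [ha])
      rwa [ENNReal.rpow_inv_rpow hp.ne'] at this
    refine ENNReal.le_of_forall_nnreal_lt fun r _ => hT r (by simp)
  · exact main a ha le_rfl

theorem shell_sum {n : ℕ} (ν : Measure (EuclideanSpace ℝ (Fin n)))
    {f : EuclideanSpace ℝ (Fin n) → ℝ} (hf : Measurable f) {p : ℝ} (hp : 0 < p) :
    ∑' i : ℤ, ((2:ℝ≥0∞) ^ i) ^ p * ν (shell f i) ≤ ∫⁻ x, ENNReal.ofReal |f x| ^ p ∂ν := by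
  have hd : Pairwise (Function.onFun Disjoint (shell f)) := by
    intro i j hij
    rw [Function.onFun, Set.disjoint_left]
    rintro x hi hj
    have h1 := zpow_two_lt (hi.1.trans_le hj.2)
    have h2 := zpow_two_lt (hj.1.trans_le hi.2)
    omega
  refine le_trans ?_ (setLIntegral_le_lintegral (⋃ i, shell f i) _)
  rw [lintegral_iUnion (shell_measurable hf) hd]
  refine ENNReal.tsum_le_tsum fun i => ?_
  rw [← setLIntegral_const]
  refine setLIntegral_mono' (shell_measurable hf i) fun x hx => ?_
  exact ENNReal.rpow_le_rpow hx.1.le hp.le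

theorem maxOp_lt_isOpen {n : ℕ} {𝔅 : Set (Set (EuclideanSpace ℝ (Fin n)))}
    (hB : ∀ B ∈ 𝔅, IsConvexBasisSet B) (f : EuclideanSpace ℝ (Fin n) → ℝ) (a : ℝ≥0∞) :
    IsOpen {x | a < maxOp volume 𝔅 f x} := by
  rw [isOpen_iff_mem_nhds]
  intro x hx
  rw [mem_ofPred_eq, lt_maxOp_iff hB] at hx
  obtain ⟨S, hS, hxS, h⟩ := hx
  refine mem_of_superset ((hB S hS).2.2.1.mem_nhds hxS) fun y hy => ?_
  rw [mem_ofPred_eq, lt_maxOp_iff hB]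
  exact ⟨S, hS, hy, h⟩

theorem tauberian_imp {n : ℕ} {𝔅 : Set (Set (EuclideanSpace ℝ (Fin n)))}
    (hB : ∀ B ∈ 𝔅, IsConvexBasisSet B) (hhom : HomothecyInvariant 𝔅)
    (ν : Measure (EuclideanSpace ℝ (Fin n))) (γ c : ℝ) (hγ : γ ∈ Set.Ioo (0:ℝ) 1)
    (hT : TauberianCond volume ν 𝔅 γ c) :
    ∃ p₀ : ℝ, 1 < p₀ ∧ ∀ p : ℝ, p₀ < p → BoundedOnLp volume ν 𝔅 p := by
  obtain ⟨Q, hQ, hQb⟩ := tauberian_all hB hhom ν γ c hγ hT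
  obtain ⟨N, hN⟩ := exists_pow_ge (a := 2) (b := 2 * Q) (by norm_num) (by finiteness)
  refine ⟨N + 2, by linarith [N.cast_nonneg (α := ℝ)], fun p hp => ?_⟩
  have hp0 : 0 < p := by linarith [N.cast_nonneg (α := ℝ)]
  have hQp : Q * ((2:ℝ≥0∞) ^ p)⁻¹ ≤ 2⁻¹ := by
    rw [← div_eq_mul_inv, ENNReal.div_le_iff (by positivity)
      (ENNReal.rpow_ne_top_of_nonneg hp0.le (by simp))]
    have h2 : 2 * Q ≤ 2 ^ p := by
      refine hN.trans ?_
      rw [← ENNReal.rpow_natCast]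
      exact ENNReal.rpow_le_rpow_of_exponent_le (by norm_num) (by linarith)
    calc Q = 2⁻¹ * (2 * Q) := by
          rw [← mul_assoc, ENNReal.inv_mul_cancel (by simp) (by simp), one_mul]
      _ ≤ _ := by gcongr
  refine ⟨4 ^ p * Q * 2, ?_, fun f hf => ?_⟩
  · have : (4:ℝ≥0∞) ^ p ≠ ⊤ := ENNReal.rpow_ne_top_of_nonneg hp0.le (by simp)
    finiteness
  set I := ∫⁻ x, ENNReal.ofReal |f x| ^ p ∂ν with hI
  have hmeas : ∀ j : ℤ, MeasurableSet {x | (2:ℝ≥0∞) ^ (j+1) < maxOp volume 𝔅 f x} := fun j =>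
    (maxOp_lt_isOpen hB f _).measurableSet
  calc ∫⁻ x, maxOp volume 𝔅 f x ^ p ∂ν
      ≤ ∫⁻ x, ∑' j : ℤ, ((2:ℝ≥0∞) ^ (j+2)) ^ p *
          {x | (2:ℝ≥0∞) ^ (j+1) < maxOp volume 𝔅 f x}.indicator 1 x ∂ν :=
        lintegral_mono fun x => rpow_le_tsum _ hp0
    _ = ∑' j : ℤ, ((2:ℝ≥0∞) ^ (j+2)) ^ p *
          ν {x | (2:ℝ≥0∞) ^ (j+1) < maxOp volume 𝔅 f x} := by
        rw [lintegral_tsum]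
        · congr 1
          ext j
          rw [lintegral_const_mul _ (measurable_one.indicator (hmeas j)),
            lintegral_indicator_one (hmeas j)]
        · exact fun j => ((measurable_one.indicator (hmeas j)).const_mul _).aemeasurable
    _ ≤ ∑' j : ℤ, ((2:ℝ≥0∞) ^ (j+2)) ^ p * ∑' m : ℕ, Q ^ (m+1) * ν (shell f (j+m)) := by
        gcongr with j
        refine (measure_mono (maxOp_superlevel hB hf j)).trans ((measure_iUnion_le _).trans ?_)
        gcongr with m
        exact hQb m _ (shell_measurable hf _)
    _ = ∑' m : ℕ, Q ^ (m+1) * ∑' j : ℤ, ((2:ℝ≥0∞) ^ (j+2)) ^ p * ν (shell f (j+m)) := by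
        simp_rw [← ENNReal.tsum_mul_left]
        rw [ENNReal.tsum_comm]
        congr 1
        ext m
        congr 1
        ext j
        ring
    _ = ∑' m : ℕ, Q ^ (m+1) * (4 ^ p * ((2 ^ p)⁻¹) ^ m *
          ∑' i : ℤ, ((2:ℝ≥0∞) ^ i) ^ p * ν (shell f i)) := by
        congr 1
        ext m
        congr 1
        rw [← (Equiv.addRight (m:ℤ)).tsum_eq (fun i : ℤ => ((2:ℝ≥0∞) ^ i) ^ p * ν (shell f i)),
          ← ENNReal.tsum_mul_left]
        congr 1
        ext j
        simp only [Equiv.coe_addRight]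
        rw [← mul_assoc]
        congr 1
        have e0 : ∀ k : ℤ, ((2:ℝ≥0∞) ^ k) ^ p = 2 ^ (k * p) := by
          intro k
          rw [← ENNReal.rpow_intCast, ← ENNReal.rpow_mul]
        have e4 : (4:ℝ≥0∞) ^ p = 2 ^ (2 * p) := by
          rw [ENNReal.rpow_mul]; norm_num
        have em : (((2:ℝ≥0∞) ^ p)⁻¹) ^ m = 2 ^ (-(m * p)) := by
          rw [← ENNReal.rpow_neg, ← ENNReal.rpow_natCast, ← ENNReal.rpow_mul]
          congr 1; ring
        rw [e0, e0, e4, em, ← ENNReal.rpow_add _ _ (by simp) (by simp),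
          ← ENNReal.rpow_add _ _ (by simp) (by simp)]
        congr 1
        push_cast
        ring
    _ ≤ ∑' m : ℕ, Q ^ (m+1) * (4 ^ p * ((2 ^ p)⁻¹) ^ m * I) := by
        gcongr with m
        exact shell_sum ν hf hp0
    _ = ∑' m : ℕ, (4 ^ p * Q * I) * (Q * (2 ^ p)⁻¹) ^ m := by
        congr 1
        ext m
        rw [mul_pow]
        ring
    _ ≤ ∑' m : ℕ, (4 ^ p * Q * I) * (2⁻¹) ^ m := by
        gcongr
    _ = 4 ^ p * Q * 2 * I := by
        rw [ENNReal.tsum_mul_left, ENNReal.tsum_geometric, ENNReal.one_sub_inv_two, inv_inv]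
        ring

theorem bounded_imp {n : ℕ} {𝔅 : Set (Set (EuclideanSpace ℝ (Fin n)))}
    (hB : ∀ B ∈ 𝔅, IsConvexBasisSet B) 
    (ν : Measure (EuclideanSpace ℝ (Fin n))) (p : ℝ) (hp : 0 < p)
    (h : BoundedOnLp volume ν 𝔅 p) :
    ∃ γ ∈ Set.Ioo (0 : ℝ) 1, ∃ c : ℝ, 0 < c ∧ TauberianCond volume ν 𝔅 γ c := by
  obtain ⟨C, hC, h⟩ := h
  have h2t : (2:ℝ≥0∞) ^ p ≠ ⊤ := ENNReal.rpow_ne_top_of_nonneg hp.le (by simp)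
  refine ⟨1/2, ⟨by norm_num, by norm_num⟩, (2 ^ p * C).toReal + 1, by positivity, fun E hE => ?_⟩
  have hc : 2 ^ p * C ≤ ENNReal.ofReal ((2 ^ p * C).toReal + 1) := by
    rw [← ENNReal.ofReal_toReal (a := 2 ^ p * C) (by finiteness)]
    apply ENNReal.ofReal_le_ofReal
    simp
  refine le_trans ?_ (mul_le_mul_left hc _)
  have hf := h (E.indicator 1) (measurable_one.indicator hE)
  have hI : ∫⁻ x, ENNReal.ofReal |E.indicator (1 : EuclideanSpace ℝ (Fin n) → ℝ) x| ^ p ∂ν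
      = ν E := by
    rw [← lintegral_indicator_one hE]
    congr 1
    ext y
    by_cases hy : y ∈ E <;> simp [hy, hp]
  rw [hI] at hf
  have hmeas : MeasurableSet {x | ENNReal.ofReal (1/2) < maxOp volume 𝔅 (E.indicator 1) x} :=
    (maxOp_lt_isOpen hB _ _).measurableSet
  rw [mul_assoc]
  refine le_trans ?_ (mul_le_mul_right hf _)
  rw [← lintegral_const_mul' _ _ h2t, ← lintegral_indicator_one hmeas]
  refine lintegral_mono fun x => ?_
  by_cases hx : x ∈ {x | ENNReal.ofReal (1/2) < maxOp volume 𝔅 (E.indicator 1) x}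
  · rw [Set.indicator_of_mem hx, ← ENNReal.mul_rpow_of_nonneg _ _ hp.le]
    refine ENNReal.one_le_rpow ?_ hp
    have : (1:ℝ≥0∞) = 2 * ENNReal.ofReal (1/2) := by
      rw [show (2:ℝ≥0∞) = ENNReal.ofReal 2 by simp, ← ENNReal.ofReal_mul (by norm_num)]
      norm_num
    rw [this]
    exact mul_le_mul_right (le_of_lt hx) _
  · rw [Set.indicator_of_notMem hx]
    exact zero_le

end helpers

/-- For a homothecy invariant basis `𝔅` of nonempty bounded open convex
sets and a nonnegative locally integrable weight `w` (finite on members of `𝔅`), the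
weighted Tauberian condition at some fixed level `γ ∈ (0,1)` for the unweighted maximal
operator `M_𝔅` holds iff there is `p₀ > 1` such that `M_𝔅` is bounded on `L^p(w)` for
all `p > p₀`. -/
theorem statement3 (n : ℕ) (𝔅 : Set (Set (EuclideanSpace ℝ (Fin n))))
    (hB : ∀ B ∈ 𝔅, IsConvexBasisSet B) (hhom : HomothecyInvariant 𝔅)
    (w : EuclideanSpace ℝ (Fin n) → ℝ) (hw0 : ∀ x, 0 ≤ w x)
    (hwloc : LocallyIntegrable w volume)
    (hwB : ∀ B ∈ 𝔅, ∫⁻ x in B, ENNReal.ofReal (w x) ∂volume < ⊤) :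
    (∃ γ ∈ Set.Ioo (0 : ℝ) 1, ∃ c : ℝ, 0 < c ∧
      TauberianCond volume (volume.withDensity fun x => ENNReal.ofReal (w x)) 𝔅 γ c)
    ↔ (∃ p₀ : ℝ, 1 < p₀ ∧ ∀ p : ℝ, p₀ < p →
        BoundedOnLp volume (volume.withDensity fun x => ENNReal.ofReal (w x)) 𝔅 p) := by
  constructor
  · rintro ⟨γ, hγ, c, hc, hT⟩
    exact tauberian_imp hB hhom _ γ c hγ hT
  · rintro ⟨p₀, hp₀, h⟩
    exact bounded_imp hB _ (p₀ + 1) (by linarith) (h _ (by linarith))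
end

section
/- Let 𝔅 be a homothecy invariant basis of nonempty bounded open convex subsets of ℝⁿ which is also a Muckenhoupt basis, and let w be a nonnegative locally integrable function with ∫_B w < ∞ for every B ∈ 𝔅. Then w ∈ A_{∞,𝔅} if and only if there exist γ ∈ (0,1) and c > 0 such that w({x ∈ ℝⁿ : M_𝔅(1_E)(x) > γ}) ≤ c·w(E) for every Lebesgue measurable set E ⊆ ℝⁿ, where w(A) = ∫_A w(x) dx. -/
open MeasureTheory Set Filter
open scoped ENNReal Topology Pointwise

/-- Volume of a homothetic copy. -/
lemma vol_homothet {n : ℕ} (K : Set (EuclideanSpace ℝ (Fin n))) (y : EuclideanSpace ℝ (Fin n))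
    {s : ℝ} (hs : 0 ≤ s) :
    volume (y +ᵥ s • K) = ENNReal.ofReal (s ^ n) * volume K := by
  rw [measure_vadd, Measure.addHaar_smul_of_nonneg _ hs, finrank_euclideanSpace_fin]

lemma vol_pos {n : ℕ} {K : Set (EuclideanSpace ℝ (Fin n))} (hK : IsConvexBasisSet K) :
    0 < volume K := hK.2.2.1.measure_pos _ hK.1

lemma vol_fin {n : ℕ} {K : Set (EuclideanSpace ℝ (Fin n))} (hK : IsConvexBasisSet K) :
    volume K ≠ ⊤ := hK.2.1.measure_lt_top.ne

/-- A crude Rogers-Shephard inequality. -/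
lemma vol_diff_body {n : ℕ} {K : Set (EuclideanSpace ℝ (Fin n))} (hK : IsConvexBasisSet K) :
    volume (K - K) ≤ 4 ^ n * volume K := by
  have hKm : MeasurableSet K := hK.2.2.1.measurableSet
  let k : EuclideanSpace ℝ (Fin n) → ℝ≥0∞ := K.indicator 1
  have hk : Measurable k := measurable_one.indicator hKm
  have hint : ∫⁻ x, ∫⁻ y, k y * k (y - x) = volume K * volume K := by
    rw [lintegral_lintegral_swap]
    · have : ∀ y, ∫⁻ x, k y * k (y - x) = k y * volume K := by
        intro y
        rw [lintegral_const_mul _ (by fun_prop), lintegral_sub_left_eq_self k y,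
          lintegral_indicator_one hKm]
      simp_rw [this]
      rw [lintegral_mul_const _ hk, lintegral_indicator_one hKm]
    · apply Measurable.aemeasurable
      fun_prop
  have hDo : IsOpen (K - K) := hK.2.2.1.sub_right
  have hDm : MeasurableSet ((2⁻¹ : ℝ) • (K - K)) := by
    exact (hDo.smul₀ (by norm_num)).measurableSet
  have hlow : ∀ x ∈ (2⁻¹ : ℝ) • (K - K),
      ENNReal.ofReal ((2⁻¹ : ℝ) ^ n) * volume K ≤ ∫⁻ y, k y * k (y - x) := by
    rintro x ⟨d, ⟨a, ha, b, hb, rfl⟩, rfl⟩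
    rw [← vol_homothet K ((2⁻¹ : ℝ) • a) (by norm_num)]
    rw [← lintegral_indicator_one]
    · apply lintegral_mono
      intro y
      by_cases hy : y ∈ (2⁻¹ : ℝ) • a +ᵥ (2⁻¹ : ℝ) • K
      · obtain ⟨_, ⟨z, hz, rfl⟩, rfl⟩ := hy
        have h1 : (2⁻¹ : ℝ) • a +ᵥ (2⁻¹ : ℝ) • z ∈ K :=
          hK.2.2.2 ha hz (by norm_num) (by norm_num) (by norm_num)
        have h2 : ((2⁻¹ : ℝ) • a +ᵥ (2⁻¹ : ℝ) • z) - (2⁻¹ : ℝ) • (a - b) ∈ K := by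
          have := hK.2.2.2 hb hz (show (0 : ℝ) ≤ 2⁻¹ by norm_num)
            (show (0 : ℝ) ≤ 2⁻¹ by norm_num) (by norm_num)
          convert this using 1
          simp only [vadd_eq_add]
          module
        simp only [k]
        rw [indicator_of_mem h1, indicator_of_mem h2]
        simp only [Pi.one_apply, mul_one]
        exact Set.indicator_apply_le' (fun _ => le_rfl) (fun _ => zero_le)
      · simp [hy]
    · exact ((hK.2.2.1.smul₀ (by norm_num)).vadd _).measurableSet
  have h1 : (ENNReal.ofReal ((2⁻¹ : ℝ) ^ n) * volume K) * volume ((2⁻¹ : ℝ) • (K - K))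
      ≤ volume K * volume K := by
    rw [← hint, ← setLIntegral_const]
    exact (setLIntegral_mono' hDm hlow).trans (setLIntegral_le_lintegral _ _)
  rw [Measure.addHaar_smul_of_nonneg _ (by norm_num), finrank_euclideanSpace_fin] at h1
  have h2 : ENNReal.ofReal ((2⁻¹ : ℝ) ^ n) = (2 ^ n : ℝ≥0∞)⁻¹ := by
    rw [inv_pow, ENNReal.ofReal_inv_of_pos (by positivity), ENNReal.ofReal_pow (by norm_num)]
    simp
  rw [h2] at h1
  have h20 : (2 ^ n : ℝ≥0∞) ≠ 0 := by simp
  have h2t : (2 ^ n : ℝ≥0∞) ≠ ⊤ := by simp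
  have h4 : (4 : ℝ≥0∞) ^ n = 2 ^ n * 2 ^ n := by rw [← mul_pow]; norm_num
  have h3 : volume K * ((2 ^ n : ℝ≥0∞)⁻¹ * (2 ^ n : ℝ≥0∞)⁻¹ * volume (K - K))
      ≤ volume K * volume K := by
    refine le_trans (le_of_eq ?_) h1
    ring
  rw [ENNReal.mul_le_mul_iff_right (vol_pos hK).ne' (vol_fin hK)] at h3
  calc volume (K - K) = (2 ^ n * (2 ^ n : ℝ≥0∞)⁻¹) * (2 ^ n * (2 ^ n : ℝ≥0∞)⁻¹) * volume (K - K) := by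
        rw [ENNReal.mul_inv_cancel h20 h2t]; simp
    _ = 4 ^ n * ((2 ^ n : ℝ≥0∞)⁻¹ * (2 ^ n : ℝ≥0∞)⁻¹ * volume (K - K)) := by rw [h4]; ring
    _ ≤ _ := by gcongr

/-- Enlargement: everything of comparable size meeting a homothet lies in a set of
comparable volume. -/
lemma exists_enlargement {n : ℕ} {K : Set (EuclideanSpace ℝ (Fin n))} (hK : IsConvexBasisSet K)
    (b : EuclideanSpace ℝ (Fin n)) {r : ℝ} (hr : 0 < r) :
    ∃ L : Set (EuclideanSpace ℝ (Fin n)), volume L ≤ 12 ^ n * volume (b +ᵥ r • K) ∧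
      ∀ (a : EuclideanSpace ℝ (Fin n)) (s : ℝ), 0 < s → s ≤ 2 * r →
        ((a +ᵥ s • K) ∩ (b +ᵥ r • K)).Nonempty → a +ᵥ s • K ⊆ L := by
  obtain ⟨k0, hk0⟩ := hK.1
  refine ⟨(b + r • k0) +ᵥ (3 * r) • (K - K), ?_, ?_⟩
  · rw [vol_homothet _ _ (by positivity), vol_homothet _ _ hr.le]
    have : ENNReal.ofReal ((3 * r) ^ n) = 3 ^ n * ENNReal.ofReal (r ^ n) := by
      rw [mul_pow, ENNReal.ofReal_mul (by positivity), ENNReal.ofReal_pow (by norm_num)]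
      simp
    calc _ ≤ ENNReal.ofReal ((3 * r) ^ n) * (4 ^ n * volume K) := by
          gcongr; exact vol_diff_body hK
      _ = (3 ^ n * 4 ^ n) * (ENNReal.ofReal (r ^ n) * volume K) := by rw [this]; ring
      _ = _ := by rw [← mul_pow]; norm_num
  · rintro a s hs hsr ⟨_, ⟨_, ⟨z, hz, rfl⟩, rfl⟩, ⟨_, ⟨z', hz', rfl⟩, h⟩⟩ _ ⟨_, ⟨y, hy, rfl⟩, rfl⟩
    simp only [vadd_eq_add] at h ⊢
    have hD : Convex ℝ (K - K) := hK.2.2.2.sub hK.2.2.2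
    have h0 : (0 : EuclideanSpace ℝ (Fin n)) ∈ K - K := ⟨k0, hk0, k0, hk0, sub_self _⟩
    have h1 : y - z ∈ K - K := ⟨y, hy, z, hz, rfl⟩
    have h2 : z' - k0 ∈ K - K := ⟨z', hz', k0, hk0, rfl⟩
    have h3 : (s / (2 * r)) • (y - z) ∈ K - K :=
      hD.smul_mem_of_zero_mem h0 h1 ⟨by positivity, by rw [div_le_one (by positivity)]; exact hsr⟩
    have h4 := hD h3 h2 (a := 2 / 3) (b := 1 / 3) (by norm_num) (by norm_num) (by norm_num)
    refine ⟨_, ⟨_, h4, rfl⟩, ?_⟩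
    have h5 : a = b + r • z' - s • z := by rw [h]; abel
    simp only [vadd_eq_add]
    have e1 : 3 * r * (2 / 3 * (s / (2 * r))) = s := by field_simp
    have e2 : 3 * r * (1 / 3) = r := by ring
    rw [h5, smul_add, smul_smul (2 / 3 : ℝ), smul_smul (3 * r), smul_smul (3 * r), e1, e2]
    module

lemma homothet_mono {n : ℕ} {K : Set (EuclideanSpace ℝ (Fin n))} (hK : Convex ℝ K)
    {x : EuclideanSpace ℝ (Fin n)} (hx : x ∈ K) {s t : ℝ} (hs : 0 < s) (hst : s ≤ t) :
    (1 - s) • x +ᵥ s • K ⊆ (1 - t) • x +ᵥ t • K := by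
  rintro _ ⟨_, ⟨k, hk, rfl⟩, rfl⟩
  have ht : 0 < t := hs.trans_le hst
  have hst1 : s / t ≤ 1 := by rw [div_le_one ht]; exact hst
  have h := hK hx hk (a := 1 - s / t) (b := s / t) (by linarith) (by positivity) (by ring)
  refine ⟨_, ⟨_, h, rfl⟩, ?_⟩
  simp only [vadd_eq_add]
  rw [smul_add, smul_smul, smul_smul]
  have e1 : t * (1 - s / t) = t - s := by field_simp
  have e2 : t * (s / t) = s := by field_simp
  rw [e1, e2]
  module

lemma homothet_one {n : ℕ} (K : Set (EuclideanSpace ℝ (Fin n)))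
    (x : EuclideanSpace ℝ (Fin n)) :
    (1 - (1 : ℝ)) • x +ᵥ (1 : ℝ) • K = K := by
  simp

lemma homothet_open {n : ℕ} {K : Set (EuclideanSpace ℝ (Fin n))} (hK : IsOpen K)
    (y : EuclideanSpace ℝ (Fin n)) {s : ℝ} (hs : 0 < s) : IsOpen (y +ᵥ s • K) :=
  (hK.smul₀ hs.ne').vadd _

lemma homothet_mem {n : ℕ} {K : Set (EuclideanSpace ℝ (Fin n))}
    {x : EuclideanSpace ℝ (Fin n)} (hx : x ∈ K) (s : ℝ) : x ∈ (1 - s) • x +ᵥ s • K := by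
  refine ⟨_, ⟨x, hx, rfl⟩, ?_⟩
  simp only [vadd_eq_add]
  module

/-- Stopping time selection at a density point. -/
lemma stopping {n : ℕ} {γ γ' ρ : ℝ} (hγ : γ ∈ Ioo (0 : ℝ) 1) (hρ : 1 < ρ)
    (hρn : γ * ρ ^ n ≤ γ')
    {K : Set (EuclideanSpace ℝ (Fin n))} (hK : IsConvexBasisSet K)
    {E : Set (EuclideanSpace ℝ (Fin n))} (hEK : E ⊆ K)
    (hE : volume E ≤ ENNReal.ofReal γ * volume K)
    {x : EuclideanSpace ℝ (Fin n)} (hx : x ∈ E)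
    (hd : Tendsto (fun r => volume (E ∩ Metric.closedBall x r) / volume (Metric.closedBall x r))
      (𝓝[>] 0) (𝓝 1)) :
    ∃ s : ℝ, 0 < s ∧ s ≤ 1 ∧
      ENNReal.ofReal γ * volume ((1 - s) • x +ᵥ s • K) < volume (E ∩ ((1 - s) • x +ᵥ s • K)) ∧
      volume (E ∩ ((1 - s) • x +ᵥ s • K)) ≤ ENNReal.ofReal γ' * volume ((1 - s) • x +ᵥ s • K) := by
  have hxK := hEK hx
  let B : ℝ → Set (EuclideanSpace ℝ (Fin n)) := fun s => (1 - s) • x +ᵥ s • K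
  have hvB : ∀ s : ℝ, 0 ≤ s → volume (B s) = ENNReal.ofReal (s ^ n) * volume K :=
    fun s hs => vol_homothet K _ hs
  let S : Set ℝ := {s | 0 < s ∧ s ≤ 1 ∧ ENNReal.ofReal γ * volume (B s) < volume (E ∩ B s)}
  have hbdd : BddAbove S := ⟨1, fun s hs => hs.2.1⟩
  have hne : S.Nonempty := by
    have h1 := Measure.tendsto_addHaar_inter_smul_one_of_density_one volume E x hd (-x +ᵥ K)
      (hK.2.2.1.vadd _).measurableSet (by rw [measure_vadd]; exact (vol_pos hK).ne')
      (by rw [measure_vadd]; exact vol_fin hK)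
    have hlt : ENNReal.ofReal γ < 1 := by
      rw [ENNReal.ofReal_lt_one]; exact hγ.2
    have h2 := h1.eventually (lt_mem_nhds hlt)
    have h3 : ∀ᶠ s : ℝ in 𝓝[>] 0, s ∈ Ioc (0 : ℝ) 1 := Ioc_mem_nhdsGT one_pos
    obtain ⟨s, hs1, hs2⟩ := (h2.and h3).exists
    have hBs : {x} + s • (-x +ᵥ K) = B s := by
      ext z
      simp only [B, singleton_add, mem_image, mem_smul_set, mem_vadd_set, vadd_eq_add]
      constructor
      · rintro ⟨_, ⟨_, ⟨k, hk, rfl⟩, rfl⟩, rfl⟩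
        exact ⟨_, ⟨k, hk, rfl⟩, by module⟩
      · rintro ⟨_, ⟨k, hk, rfl⟩, rfl⟩
        exact ⟨_, ⟨_, ⟨k, hk, rfl⟩, rfl⟩, by module⟩
    rw [hBs] at hs1
    refine ⟨s, hs2.1, hs2.2, ?_⟩
    exact ENNReal.mul_lt_of_lt_div hs1
  obtain ⟨s1, hs1⟩ := hne
  have hsup : 0 < sSup S := hs1.1.trans_le (le_csSup hbdd hs1)
  have hlt : sSup S / ρ < sSup S := by
    rw [div_lt_iff₀ (by linarith)]; nlinarith
  obtain ⟨s, hs, hss⟩ := exists_lt_of_lt_csSup ⟨s1, hs1⟩ hlt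
  rw [div_lt_iff₀ (by linarith)] at hss
  refine ⟨s, hs.1, hs.2.1, hs.2.2, ?_⟩
  have hkey : volume (E ∩ B s) ≤ ENNReal.ofReal γ * volume (B (s * ρ)) := by
    by_cases h1 : s * ρ ≤ 1
    · have hnot : s * ρ ∉ S := fun h => absurd (le_csSup hbdd h) (not_le.2 hss)
      have : ¬ (ENNReal.ofReal γ * volume (B (s * ρ)) < volume (E ∩ B (s * ρ))) :=
        fun h => hnot ⟨mul_pos hs.1 (by linarith), h1, h⟩
      refine le_trans (measure_mono ?_) (not_lt.1 this)
      exact inter_subset_inter_right _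
        (homothet_mono hK.2.2.2 hxK hs.1 (by nlinarith [hs.1]))
    · refine (measure_mono inter_subset_left).trans (hE.trans ?_)
      gcongr
      have := homothet_mono hK.2.2.2 hxK one_pos (not_le.1 h1).le
      rwa [homothet_one] at this
  refine hkey.trans ?_
  show _ ≤ ENNReal.ofReal γ' * volume (B s)
  rw [hvB _ hs.1.le, hvB _ (mul_nonneg hs.1.le (by linarith)), ← mul_assoc, ← mul_assoc,
    ← ENNReal.ofReal_mul hγ.1.le, ← ENNReal.ofReal_mul']
  · have h7 : γ * (s * ρ) ^ n ≤ γ' * s ^ n := by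
      rw [mul_pow]
      have := pow_pos hs.1 n
      nlinarith
    exact mul_le_mul' (ENNReal.ofReal_le_ofReal h7) le_rfl
  · have := hs.1
    positivity

/-- Growth of the halo. -/
lemma growth (n : ℕ) {γ : ℝ} (hγ : γ ∈ Ioo (0 : ℝ) 1) :
    ∃ δ : ℝ, 0 < δ ∧ ∀ K : Set (EuclideanSpace ℝ (Fin n)), IsConvexBasisSet K →
      ∀ E ⊆ K, MeasurableSet E → volume E ≤ ENNReal.ofReal γ * volume K →
      ∃ H : Set (EuclideanSpace ℝ (Fin n)), IsOpen H ∧ H ⊆ K ∧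
        (∀ x ∈ H, ∃ (y : EuclideanSpace ℝ (Fin n)) (s : ℝ), 0 < s ∧ x ∈ y +ᵥ s • K ∧
          ENNReal.ofReal γ * volume (y +ᵥ s • K) < volume (E ∩ (y +ᵥ s • K))) ∧
        ENNReal.ofReal (1 + δ) * volume E ≤ volume (E ∪ H) := by
  obtain ⟨hγ0, hγ1⟩ := hγ
  obtain ⟨ρ, hρ, hρn⟩ : ∃ ρ : ℝ, 1 < ρ ∧ γ * ρ ^ n ≤ (1 + γ) / 2 := by
    have hc : Tendsto (fun ρ : ℝ => γ * ρ ^ n) (𝓝[>] 1) (𝓝 (γ * 1 ^ n)) :=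
      ((continuous_const.mul (continuous_pow n)).tendsto 1).mono_left nhdsWithin_le_nhds
    have h1 := hc.eventually (gt_mem_nhds (show γ * 1 ^ n < (1 + γ) / 2 by
      rw [one_pow]; linarith))
    obtain ⟨ρ, h2, h3⟩ := (h1.and self_mem_nhdsWithin).exists
    exact ⟨ρ, h3, h2.le⟩
  set γ' : ℝ := (1 + γ) / 2 with hγ'
  have hγ'1 : 0 < 1 - γ' := by rw [hγ']; linarith
  have hγ'0 : 0 < γ' := by rw [hγ']; linarith
  refine ⟨(1 - γ') / 12 ^ n, by positivity, ?_⟩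
  intro K hK E hEK hEm hE
  let T : EuclideanSpace ℝ (Fin n) → Prop := fun x =>
    Tendsto (fun r => volume (E ∩ Metric.closedBall x r) / volume (Metric.closedBall x r))
      (𝓝[>] 0) (𝓝 1)
  have hT : ∀ᵐ x, x ∈ E → T x :=
    (ae_restrict_iff' hEm).1 (Besicovitch.ae_tendsto_measure_inter_div volume E)
  let G : Set (EuclideanSpace ℝ (Fin n)) := {x | x ∈ E ∧ T x}
  have hEG : volume E ≤ volume G := by
    apply measure_mono_ae
    filter_upwards [hT] with x hx h
    exact ⟨h, hx h⟩
  have hst : ∀ x, ∃ s : ℝ, x ∈ G → 0 < s ∧ s ≤ 1 ∧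
      ENNReal.ofReal γ * volume ((1 - s) • x +ᵥ s • K) < volume (E ∩ ((1 - s) • x +ᵥ s • K)) ∧
      volume (E ∩ ((1 - s) • x +ᵥ s • K))
        ≤ ENNReal.ofReal γ' * volume ((1 - s) • x +ᵥ s • K) := by
    intro x
    by_cases hx : x ∈ G
    · obtain ⟨s, hs⟩ := stopping ⟨hγ0, hγ1⟩ hρ hρn hK hEK hE hx.1 hx.2
      exact ⟨s, fun _ => hs⟩
    · exact ⟨0, fun h => absurd h hx⟩
  choose σ hσ using hst
  let B : EuclideanSpace ℝ (Fin n) → Set (EuclideanSpace ℝ (Fin n)) :=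
    fun x => (1 - σ x) • x +ᵥ σ x • K
  have hBo : ∀ x ∈ G, IsOpen (B x) := fun x hx => homothet_open hK.2.2.1 _ (hσ x hx).1
  have hBx : ∀ x ∈ G, x ∈ B x := fun x hx => homothet_mem (hEK hx.1) _
  have hBK : ∀ x ∈ G, B x ⊆ K := fun x hx => by
    have := homothet_mono hK.2.2.2 (hEK hx.1) (hσ x hx).1 (hσ x hx).2.1
    rwa [homothet_one] at this
  obtain ⟨u, huG, hud, hucov⟩ := Vitali.exists_disjoint_subfamily_covering_enlargement B G σ 2
    one_lt_two (fun a ha => (hσ a ha).1.le) 1 (fun a ha => (hσ a ha).2.1)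
    (fun a ha => ⟨a, hBx a ha⟩)
  have huc : u.Countable := hud.countable_of_isOpen (fun a ha => hBo a (huG ha))
    (fun a ha => ⟨a, hBx a (huG ha)⟩)
  have hL : ∀ b : u, ∃ L : Set (EuclideanSpace ℝ (Fin n)), volume L ≤ 12 ^ n * volume (B b) ∧
      ∀ (a : EuclideanSpace ℝ (Fin n)) (s : ℝ), 0 < s → s ≤ 2 * σ b →
        ((a +ᵥ s • K) ∩ B b).Nonempty → a +ᵥ s • K ⊆ L :=
    fun b => exists_enlargement hK _ (hσ b (huG b.2)).1
  choose L hL1 hL2 using hL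
  have : Countable u := huc.to_subtype
  have hcov : G ⊆ ⋃ b : u, L b := by
    intro x hx
    obtain ⟨b, hb, hne, hle⟩ := hucov x hx
    exact mem_iUnion.2 ⟨⟨b, hb⟩, hL2 ⟨b, hb⟩ _ _ (hσ x hx).1 hle hne (hBx x hx)⟩
  have h1 : volume E ≤ 12 ^ n * ∑' b : u, volume (B b) := by
    rw [← ENNReal.tsum_mul_left]
    exact (hEG.trans (measure_mono hcov)).trans ((measure_iUnion_le _).trans
      (ENNReal.tsum_le_tsum hL1))
  let H : Set (EuclideanSpace ℝ (Fin n)) := ⋃ x ∈ G, B x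
  have hHo : IsOpen H := isOpen_biUnion hBo
  have hdiff : ∀ b : u, ENNReal.ofReal (1 - γ') * volume (B b) ≤ volume (B b \ E) := by
    intro b
    have hb := huG b.2
    have hfin : volume (B b) ≠ ⊤ := ((measure_mono (hBK b hb)).trans_lt (vol_fin hK).lt_top).ne
    have h2 := measure_inter_add_sdiff (μ := volume) (B b) hEm
    have h3 : volume (B b ∩ E) ≤ ENNReal.ofReal γ' * volume (B b) := by
      rw [inter_comm]; exact (hσ b hb).2.2.2
    have h4 : ENNReal.ofReal γ' * volume (B b) + ENNReal.ofReal (1 - γ') * volume (B b)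
        = volume (B b) := by
      rw [← add_mul, ← ENNReal.ofReal_add hγ'0.le hγ'1.le]; simp
    have h5 : ENNReal.ofReal γ' * volume (B b) + ENNReal.ofReal (1 - γ') * volume (B b)
        ≤ ENNReal.ofReal γ' * volume (B b) + volume (B b \ E) := by
      rw [h4]; nth_rewrite 1 [← h2]; gcongr
    exact (ENNReal.add_le_add_iff_left (ENNReal.mul_ne_top ENNReal.ofReal_ne_top hfin)).1 h5
  have h6 : ENNReal.ofReal (1 - γ') * ∑' b : u, volume (B b) ≤ volume (H \ E) := by
    rw [← ENNReal.tsum_mul_left]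
    refine (ENNReal.tsum_le_tsum hdiff).trans ?_
    rw [← measure_iUnion]
    · apply measure_mono
      refine iUnion_subset fun b => sdiff_subset_sdiff_left ?_
      exact subset_biUnion_of_mem (u := B) (huG b.2)
    · intro a b hab
      exact (hud a.2 b.2 (fun h => hab (Subtype.ext h))).mono sdiff_subset sdiff_subset
    · exact fun b => (hBo b (huG b.2)).measurableSet.diff hEm
  refine ⟨H, hHo, iUnion₂_subset hBK, ?_, ?_⟩
  · intro x hx
    obtain ⟨a, ha, hxa⟩ := mem_iUnion₂.1 hx
    exact ⟨_, _, (hσ a ha).1, hxa, (hσ a ha).2.2.1⟩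
  · rw [← measure_add_sdiff hEm.nullMeasurableSet, ENNReal.ofReal_add zero_le_one (by positivity),
      add_mul, ENNReal.ofReal_one, one_mul]
    gcongr
    refine le_trans ?_ h6
    rw [ENNReal.ofReal_div_of_pos (by positivity)]
    calc _ ≤ ENNReal.ofReal (1 - γ') / ENNReal.ofReal (12 ^ n)
          * (12 ^ n * ∑' b : u, volume (B b)) := by gcongr
      _ = _ := by
        rw [← mul_assoc, ENNReal.ofReal_pow (by norm_num)]
        congr 1
        have : ENNReal.ofReal 12 = 12 := by simp
        rw [this]
        exact ENNReal.div_mul_cancel (by simp) (by simp)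

lemma lintegral_ind {n : ℕ} (B : Set (EuclideanSpace ℝ (Fin n)))
    {E : Set (EuclideanSpace ℝ (Fin n))} (hE : MeasurableSet E) :
    ∫⁻ y in B, ENNReal.ofReal |E.indicator (1 : EuclideanSpace ℝ (Fin n) → ℝ) y|
      = volume (E ∩ B) := by
  have : (fun y => ENNReal.ofReal |E.indicator (1 : EuclideanSpace ℝ (Fin n) → ℝ) y|)
      = E.indicator 1 := by
    ext y
    by_cases hy : y ∈ E <;> simp [hy]
  rw [this, lintegral_indicator_one hE, Measure.restrict_apply hE]

lemma subset_halo {n : ℕ} {𝔅 : Set (Set (EuclideanSpace ℝ (Fin n)))}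
    {B : Set (EuclideanSpace ℝ (Fin n))} (hB𝔅 : B ∈ 𝔅) (hB : IsConvexBasisSet B) {γ : ℝ}
    {E : Set (EuclideanSpace ℝ (Fin n))} (hE : MeasurableSet E)
    (h : ENNReal.ofReal γ * volume B < volume (E ∩ B)) :
    B ⊆ {x | ENNReal.ofReal γ < maxOp volume 𝔅 (E.indicator 1) x} := by
  intro x hx
  have h1 : ENNReal.ofReal γ < volume (E ∩ B) / volume B := by
    rw [ENNReal.lt_div_iff_mul_lt (Or.inl (vol_pos hB).ne') (Or.inl (vol_fin hB))]
    exact h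
  refine h1.trans_le ?_
  rw [← lintegral_ind B hE]
  unfold maxOp
  exact le_iSup_of_le B (le_iSup_of_le hB𝔅 (le_iSup_of_le hx
    (le_iSup_of_le (vol_pos hB) le_rfl)))

lemma iterate {n : ℕ} {𝔅 : Set (Set (EuclideanSpace ℝ (Fin n)))}
    (hB : ∀ B ∈ 𝔅, IsConvexBasisSet B) (hhom : HomothecyInvariant 𝔅)
    {γ c : ℝ} (hγ : γ ∈ Ioo (0 : ℝ) 1) (hc : 0 < c)
    (ν : Measure (EuclideanSpace ℝ (Fin n))) (hν : TauberianCond volume ν 𝔅 γ c) :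
    ∃ δ : ℝ, 0 < δ ∧ ∀ K ∈ 𝔅, ∀ (k : ℕ), ∀ E ⊆ K, MeasurableSet E →
      ENNReal.ofReal γ * volume K < ENNReal.ofReal ((1 + δ) ^ k) * volume E →
      ν K ≤ ENNReal.ofReal c * ENNReal.ofReal (1 + c) ^ k * ν E := by
  obtain ⟨δ, hδ, hgr⟩ := growth n hγ
  refine ⟨δ, hδ, ?_⟩
  intro K hK k
  have base : ∀ E ⊆ K, MeasurableSet E → ENNReal.ofReal γ * volume K < volume E →
      ν K ≤ ENNReal.ofReal c * ν E := by
    intro E hEK hEm hE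
    refine (measure_mono (subset_halo hK (hB K hK) hEm ?_)).trans (hν E hEm)
    rwa [inter_eq_left.2 hEK]
  have h1c : (1 : ℝ≥0∞) ≤ ENNReal.ofReal (1 + c) := by
    rw [ENNReal.one_le_ofReal]; linarith
  induction k with
  | zero =>
    intro E hEK hEm hE
    simpa using base E hEK hEm (by simpa using hE)
  | succ k ih =>
    intro E hEK hEm hE
    by_cases h : ENNReal.ofReal γ * volume K < volume E
    · refine (base E hEK hEm h).trans ?_
      gcongr
      exact le_mul_of_one_le_right' (one_le_pow₀ h1c)
    · obtain ⟨H, hHo, hHK, hH1, hH2⟩ := hgr K (hB K hK) E hEK hEm (not_lt.1 h)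
      have h2 : ν H ≤ ENNReal.ofReal c * ν E := by
        refine (measure_mono ?_).trans (hν E hEm)
        intro x hx
        obtain ⟨y, s, hs, hxs, hlt⟩ := hH1 x hx
        have hm : y +ᵥ s • K ∈ 𝔅 := (hhom _ ((hhom K hK).2 s hs)).1 y
        exact subset_halo hm (hB _ hm) hEm hlt hxs
      have h3 := ih (E ∪ H) (union_subset hEK hHK) (hEm.union hHo.measurableSet) (by
        refine hE.trans_le ?_
        rw [pow_succ, ENNReal.ofReal_mul (by positivity), mul_assoc]
        gcongr)
      refine h3.trans ?_
      have h4 : ν (E ∪ H) ≤ ENNReal.ofReal (1 + c) * ν E := by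
        rw [ENNReal.ofReal_add zero_le_one hc.le, add_mul, ENNReal.ofReal_one, one_mul]
        exact (measure_union_le _ _).trans (by gcongr)
      rw [pow_succ, ← mul_assoc, mul_assoc _ _ (ν E)]
      gcongr

lemma final_bound {n : ℕ} {γ c A l ε : ℝ} (hγ : γ ∈ Ioo (0 : ℝ) 1) (hc : 0 < c)
    (hA : 1 < A) (hl : 1 < l) (hε : 0 < ε) (hAl : A ^ ε < l) :
    ∃ C : ℝ≥0∞, C ≠ ⊤ ∧ ∀ (f : EuclideanSpace ℝ (Fin n) → ℝ≥0∞) (_ : Measurable f)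
      (K : Set (EuclideanSpace ℝ (Fin n))) (_ : IsConvexBasisSet K)
      (_ : ∫⁻ x in K, f x < ⊤)
      (_ : ∀ (k : ℕ), ∀ E ⊆ K, MeasurableSet E →
        ENNReal.ofReal γ * volume K < ENNReal.ofReal (l ^ k) * volume E →
        ∫⁻ x in K, f x ≤ ENNReal.ofReal c * ENNReal.ofReal A ^ k * ∫⁻ x in E, f x),
      ((∫⁻ x in K, f x) / volume K) * (((∫⁻ x in K, f x ^ (-ε)) / volume K) ^ (1 / ε)) ≤ C := by
  have hA0 : 0 < A := by linarith
  have hl0 : 0 < l := by linarith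
  set r : ℝ := A ^ ε / l with hr
  have hr0 : 0 ≤ r := by positivity
  have hr1 : r < 1 := by rw [hr, div_lt_one hl0]; exact hAl
  set D : ℝ≥0∞ := ENNReal.ofReal ((2 * c) ^ ε)
    + ∑' k : ℕ, ENNReal.ofReal ((2 * c) ^ ε * A ^ ε * r ^ k) with hD
  have hDt : D ≠ ⊤ := by
    rw [hD]
    refine ENNReal.add_ne_top.2 ⟨ENNReal.ofReal_ne_top, ?_⟩
    exact ((summable_geometric_of_lt_one hr0 hr1).mul_left _).tsum_ofReal_ne_top
  refine ⟨D ^ (1 / ε), ENNReal.rpow_ne_top_of_nonneg (by positivity) hDt, ?_⟩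
  intro f hf K hK hfin hyp
  have hKm : MeasurableSet K := hK.2.2.1.measurableSet
  have hK0 := (vol_pos hK).ne'
  have hKt := vol_fin hK
  by_cases hz : ∫⁻ x in K, f x = 0
  · rw [hz]; simp
  set a : ℝ≥0∞ := (∫⁻ x in K, f x) / volume K with ha
  have hat : a ≠ ⊤ := ENNReal.div_ne_top hfin.ne hK0
  have ha0 : a ≠ 0 := (ENNReal.div_pos hz hKt).ne'
  have haK : a * volume K = ∫⁻ x in K, f x := ENNReal.div_mul_cancel hK0 hKt
  set m : ℝ := a.toReal with hm
  have hm0 : 0 < m := ENNReal.toReal_pos ha0 hat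
  have ham : a = ENNReal.ofReal m := (ENNReal.ofReal_toReal hat).symm
  let t : ℕ → ℝ := fun k => m / (2 * c * A ^ k)
  have ht0 : ∀ k, 0 < t k := fun k => by positivity
  have htanti : Antitone t := by
    intro i j hij
    simp only [t]
    have : A ^ i ≤ A ^ j := pow_le_pow_right₀ hA.le hij
    gcongr
  have httend : Tendsto t atTop (𝓝 0) := by
    have h1 : Tendsto (fun k : ℕ => 2 * c * A ^ k) atTop atTop :=
      (tendsto_pow_atTop_atTop_of_one_lt hA).const_mul_atTop (by positivity)
    exact h1.const_div_atTop m
  let S : ℕ → Set (EuclideanSpace ℝ (Fin n)) := fun k => {x | f x ≤ ENNReal.ofReal (t k)}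
  have hSm : ∀ k, MeasurableSet (S k) := fun k => hf measurableSet_Iic
  have hS : ∀ k, volume (S k ∩ K) ≤ ENNReal.ofReal ((l ^ k)⁻¹) * volume K := by
    intro k
    have h1 : ENNReal.ofReal (l ^ k) * volume (S k ∩ K) ≤ ENNReal.ofReal γ * volume K := by
      by_contra hcon
      have h2 := hyp k (S k ∩ K) inter_subset_right ((hSm k).inter hKm) (not_le.1 hcon)
      have h3 : ∫⁻ x in S k ∩ K, f x ≤ ENNReal.ofReal (t k) * volume K := by
        calc _ ≤ ∫⁻ x in S k ∩ K, ENNReal.ofReal (t k) :=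
              setLIntegral_mono' ((hSm k).inter hKm) fun x hx => hx.1
          _ = ENNReal.ofReal (t k) * volume (S k ∩ K) := setLIntegral_const _ _
          _ ≤ _ := by gcongr; exact inter_subset_right
      have h4 : a * volume K ≤ ENNReal.ofReal (m / 2) * volume K := by
        rw [haK]
        refine h2.trans ?_
        calc _ ≤ ENNReal.ofReal c * ENNReal.ofReal A ^ k * (ENNReal.ofReal (t k) * volume K) := by
              gcongr
          _ = ENNReal.ofReal (c * A ^ k * t k) * volume K := by
              rw [ENNReal.ofReal_mul (by positivity), ENNReal.ofReal_mul hc.le,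
                ENNReal.ofReal_pow hA0.le]
              ring
          _ = _ := by
              congr 2
              simp only [t]
              field_simp
      rw [ENNReal.mul_le_mul_iff_left hK0 hKt, ham,
        ENNReal.ofReal_le_ofReal_iff (by positivity)] at h4
      linarith
    have h5 : ENNReal.ofReal (l ^ k) * volume (S k ∩ K) ≤ volume K := by
      refine h1.trans ?_
      calc _ ≤ 1 * volume K := by
            gcongr
            exact ENNReal.ofReal_le_one.2 hγ.2.le
        _ = _ := one_mul _
    calc volume (S k ∩ K)
        = ENNReal.ofReal ((l ^ k)⁻¹) * (ENNReal.ofReal (l ^ k) * volume (S k ∩ K)) := by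
          rw [← mul_assoc, ← ENNReal.ofReal_mul (by positivity),
            inv_mul_cancel₀ (by positivity)]
          simp
      _ ≤ _ := by gcongr
  have hanti : ∀ x y : ℝ≥0∞, x ≤ y → y ^ (-ε) ≤ x ^ (-ε) := by
    intro x y hxy
    rw [ENNReal.rpow_neg, ENNReal.rpow_neg]
    exact ENNReal.inv_le_inv.2 (ENNReal.rpow_le_rpow hxy hε.le)
  have hpt : ∀ x, f x ^ (-ε) ≤ ENNReal.ofReal (t 0) ^ (-ε)
      + ∑' k : ℕ, (S k).indicator (fun _ => ENNReal.ofReal (t (k + 1)) ^ (-ε)) x := by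
    intro x
    by_cases hx : f x = 0
    · have : ∑' k : ℕ, (S k).indicator (fun _ => ENNReal.ofReal (t (k + 1)) ^ (-ε)) x = ⊤ := by
        rw [eq_top_iff, ← ENNReal.tsum_const_eq_top_of_ne_zero (α := ℕ)
          (c := ENNReal.ofReal (t 0) ^ (-ε))]
        · refine ENNReal.tsum_le_tsum fun k => ?_
          rw [indicator_of_mem (show x ∈ S k by simp [S, hx])]
          exact hanti _ _ (ENNReal.ofReal_le_ofReal (htanti (Nat.zero_le _)))
        · rw [ENNReal.rpow_neg]
          simp [hε.le]
      rw [this]; simp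
    · have hex : ∃ k, ENNReal.ofReal (t k) < f x := by
        have h1 : Tendsto (fun k => ENNReal.ofReal (t k)) atTop (𝓝 (ENNReal.ofReal 0)) :=
          ENNReal.tendsto_ofReal httend
        rw [ENNReal.ofReal_zero] at h1
        exact (h1.eventually (gt_mem_nhds (pos_iff_ne_zero.2 hx))).exists
      classical
      have hsp := Nat.find_spec hex
      rcases hk : Nat.find hex with _ | j
      · rw [hk] at hsp
        exact (hanti _ _ hsp.le).trans le_self_add
      · rw [hk] at hsp
        have hj : x ∈ S j := not_lt.1 (Nat.find_min hex (m := j) (by omega))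
        refine (hanti _ _ hsp.le).trans (le_trans ?_ le_add_self)
        refine le_trans ?_ (ENNReal.le_tsum j)
        rw [indicator_of_mem hj]
  have htk : ∀ k, ENNReal.ofReal (t k) ^ (-ε)
      = ENNReal.ofReal (m ^ (-ε)) * ENNReal.ofReal ((2 * c) ^ ε * (A ^ ε) ^ k) := by
    intro k
    rw [ENNReal.ofReal_rpow_of_pos (ht0 k), ← ENNReal.ofReal_mul (by positivity)]
    congr 1
    simp only [t]
    rw [Real.div_rpow hm0.le (by positivity), Real.mul_rpow (by positivity) (by positivity),
      Real.rpow_neg (show 0 ≤ 2 * c by positivity), Real.rpow_neg (show 0 ≤ A ^ k by positivity),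
      ← Real.rpow_natCast A k, ← Real.rpow_mul hA0.le, ← Real.rpow_natCast (A ^ ε) k,
      ← Real.rpow_mul hA0.le, mul_comm ε (k : ℝ)]
    field_simp
  have hint : ∫⁻ x in K, f x ^ (-ε) ≤ ENNReal.ofReal (m ^ (-ε)) * D * volume K := by
    calc _ ≤ ∫⁻ x in K, (ENNReal.ofReal (t 0) ^ (-ε)
          + ∑' k : ℕ, (S k).indicator (fun _ => ENNReal.ofReal (t (k + 1)) ^ (-ε)) x) :=
          lintegral_mono hpt
      _ = ENNReal.ofReal (t 0) ^ (-ε) * volume K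
          + ∑' k : ℕ, ENNReal.ofReal (t (k + 1)) ^ (-ε) * volume (S k ∩ K) := by
          rw [lintegral_add_left measurable_const, setLIntegral_const, lintegral_tsum]
          · congr 2
            ext k
            rw [lintegral_indicator_const (hSm k), Measure.restrict_apply (hSm k)]
          · exact fun k => (measurable_const.indicator (hSm k)).aemeasurable
      _ ≤ ENNReal.ofReal (t 0) ^ (-ε) * volume K
          + ∑' k : ℕ, ENNReal.ofReal (t (k + 1)) ^ (-ε)
            * (ENNReal.ofReal ((l ^ k)⁻¹) * volume K) := by
          gcongr with k
          exact hS k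
      _ = ENNReal.ofReal (m ^ (-ε)) * D * volume K := by
          rw [hD, mul_add, add_mul, ← ENNReal.tsum_mul_left, ← ENNReal.tsum_mul_right]
          congr 1
          · rw [htk]; simp
          · congr 1
            ext k
            rw [htk, ← mul_assoc, mul_assoc (ENNReal.ofReal (m ^ (-ε))),
              ← ENNReal.ofReal_mul (by positivity)]
            congr 3
            rw [hr, div_pow, pow_succ]
            field_simp
  have hdiv : (∫⁻ x in K, f x ^ (-ε)) / volume K ≤ ENNReal.ofReal (m ^ (-ε)) * D :=
    ENNReal.div_le_of_le_mul hint
  calc _ ≤ a * (ENNReal.ofReal (m ^ (-ε)) * D) ^ (1 / ε) := by gcongr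
    _ = D ^ (1 / ε) := by
      rw [ENNReal.mul_rpow_of_nonneg _ _ (by positivity),
        ENNReal.ofReal_rpow_of_pos (by positivity), ← Real.rpow_mul hm0.le, ← mul_assoc, ham,
        ← ENNReal.ofReal_mul hm0.le]
      have : m * m ^ (-ε * (1 / ε)) = 1 := by
        have h1 : -ε * (1 / ε) = -1 := by field_simp
        rw [h1, Real.rpow_neg_one]
        exact mul_inv_cancel₀ hm0.ne'
      rw [this]; simp

lemma exists_small_exp {A l : ℝ} (hA : 1 < A) (hl : 1 < l) :
    ∃ ε : ℝ, 0 < ε ∧ A ^ ε < l := by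
  have h : Tendsto (fun ε : ℝ => A ^ ε) (𝓝[>] 0) (𝓝 (A ^ (0 : ℝ))) :=
    ((Real.continuous_const_rpow (by linarith)).tendsto 0).mono_left nhdsWithin_le_nhds
  rw [Real.rpow_zero] at h
  obtain ⟨ε, h1, h2⟩ := ((h.eventually (gt_mem_nhds hl)).and self_mem_nhdsWithin).exists
  exact ⟨ε, h2, h1⟩

lemma forward {n : ℕ} {𝔅 : Set (Set (EuclideanSpace ℝ (Fin n)))}
    (hB : ∀ B ∈ 𝔅, IsConvexBasisSet B) (ν : Measure (EuclideanSpace ℝ (Fin n)))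
    {p : ℝ} (hp : 1 < p) (h : BoundedOnLp volume ν 𝔅 p) :
    ∃ γ ∈ Set.Ioo (0 : ℝ) 1, ∃ c : ℝ, 0 < c ∧ TauberianCond volume ν 𝔅 γ c := by
  obtain ⟨C, hC, hbd⟩ := h
  refine ⟨1 / 2, by norm_num, C.toReal * 2 ^ p + 1, by positivity, ?_⟩
  intro E hE
  set M := maxOp volume 𝔅 (E.indicator 1) with hM
  have hopen : IsOpen {x | ENNReal.ofReal (1 / 2) < M x} := by
    rw [isOpen_iff_forall_mem_open]
    intro x hx
    simp only [hM, maxOp, mem_ofPred_eq, lt_iSup_iff] at hx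
    obtain ⟨B, hB𝔅, hxB, hpos, hlt⟩ := hx
    refine ⟨B, ?_, (hB B hB𝔅).2.2.1, hxB⟩
    intro y hy
    refine hlt.trans_le ?_
    rw [hM]
    unfold maxOp
    exact le_iSup_of_le B (le_iSup_of_le hB𝔅 (le_iSup_of_le hy (le_iSup_of_le hpos le_rfl)))
  have h1 : ENNReal.ofReal (1 / 2) ^ p * ν {x | ENNReal.ofReal (1 / 2) < M x}
      ≤ ∫⁻ x, M x ^ p ∂ν := by
    rw [← setLIntegral_const]
    refine (setLIntegral_mono' hopen.measurableSet fun x hx => ?_).trans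
      (setLIntegral_le_lintegral _ _)
    exact ENNReal.rpow_le_rpow (le_of_lt hx) (by linarith)
  have h2 := h1.trans (hbd _ (measurable_one.indicator hE))
  have h3 : ∫⁻ x, ENNReal.ofReal |E.indicator (1 : EuclideanSpace ℝ (Fin n) → ℝ) x| ^ p ∂ν
      = ν E := by
    rw [← lintegral_indicator_one hE]
    congr 1
    ext x
    by_cases hx : x ∈ E
    · simp [hx]
    · simp [hx, show 0 < p by linarith]
  rw [h3] at h2
  have h4 : ENNReal.ofReal (2 ^ p) * ENNReal.ofReal (1 / 2) ^ p = 1 := by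
    rw [ENNReal.ofReal_rpow_of_pos (by norm_num), ← ENNReal.ofReal_mul (by positivity),
      ← Real.mul_rpow (by norm_num) (by norm_num)]
    norm_num
  calc ν {x | ENNReal.ofReal (1 / 2) < M x}
      = ENNReal.ofReal (2 ^ p) * (ENNReal.ofReal (1 / 2) ^ p
          * ν {x | ENNReal.ofReal (1 / 2) < M x}) := by rw [← mul_assoc, h4, one_mul]
    _ ≤ ENNReal.ofReal (2 ^ p) * (C * ν E) := by gcongr
    _ = ENNReal.ofReal (C.toReal * 2 ^ p) * ν E := by
      rw [ENNReal.ofReal_mul ENNReal.toReal_nonneg, ENNReal.ofReal_toReal hC]; ring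
    _ ≤ _ := by gcongr; linarith

/-- For a homothecy invariant basis `𝔅` of nonempty bounded open convex
sets which is also a Muckenhoupt basis, a nonnegative locally integrable weight `w`
(finite on members of `𝔅`) belongs to `A_{∞,𝔅} = ⋃_{p>1} A_{p,𝔅}` iff it satisfies a
weighted Tauberian condition at some fixed level `γ ∈ (0,1)`. -/
theorem statement4 (n : ℕ) (𝔅 : Set (Set (EuclideanSpace ℝ (Fin n))))
    (hB : ∀ B ∈ 𝔅, IsConvexBasisSet B) (hhom : HomothecyInvariant 𝔅)
    (hMB : MuckenhouptBasis 𝔅)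
    (w : EuclideanSpace ℝ (Fin n) → ℝ) (hw0 : ∀ x, 0 ≤ w x)
    (hwloc : LocallyIntegrable w volume)
    (hwB : ∀ B ∈ 𝔅, ∫⁻ x in B, ENNReal.ofReal (w x) ∂volume < ⊤) :
    (∃ p : ℝ, 1 < p ∧ MuckenhouptAp 𝔅 w p)
    ↔ (∃ γ ∈ Set.Ioo (0 : ℝ) 1, ∃ c : ℝ, 0 < c ∧
        TauberianCond volume (volume.withDensity fun x => ENNReal.ofReal (w x)) 𝔅 γ c) := by
  constructor
  · rintro ⟨p, hp, hAp⟩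
    exact forward hB _ hp (hMB p hp w hw0 hwloc hAp)
  · rintro ⟨γ, hγ, c, hc, hT⟩
    obtain ⟨δ, hδ, hit⟩ := iterate hB hhom hγ hc _ hT
    obtain ⟨ε, hε, hAl⟩ := exists_small_exp (show 1 < 1 + c by linarith)
      (show 1 < 1 + δ by linarith)
    obtain ⟨C, hC, hfb⟩ := final_bound (n := n) hγ hc (show 1 < 1 + c by linarith)
      (show 1 < 1 + δ by linarith) hε hAl
    have hae := hwloc.aestronglyMeasurable.ae_eq_mk
    set v := hwloc.aestronglyMeasurable.mk w with hv
    have hvm : Measurable v := hwloc.aestronglyMeasurable.stronglyMeasurable_mk.measurable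
    have hwd : (volume.withDensity fun x => ENNReal.ofReal (w x))
        = volume.withDensity fun x => ENNReal.ofReal (v x) :=
      withDensity_congr_ae (hae.mono fun x hx => by simp only [hx])
    refine ⟨1 + 1 / ε, by simp [hε], C, hC, ?_⟩
    intro K hK
    have e1 : 1 - (1 + 1 / ε) / (1 + 1 / ε - 1) = -ε := by
      field_simp
      ring
    have e2 : 1 + 1 / ε - 1 = 1 / ε := by ring
    have i1 : ∫⁻ x in K, ENNReal.ofReal (w x) = ∫⁻ x in K, ENNReal.ofReal (v x) :=
      lintegral_congr_ae (ae_restrict_of_ae (hae.mono fun x hx => by simp only [hx]))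
    have i2 : ∫⁻ x in K, ENNReal.ofReal (w x) ^ (-ε) = ∫⁻ x in K, ENNReal.ofReal (v x) ^ (-ε) :=
      lintegral_congr_ae (ae_restrict_of_ae (hae.mono fun x hx => by simp only [hx]))
    rw [e1, e2, i1, i2]
    have hKm := (hB K hK).2.2.1.measurableSet
    refine hfb (fun x => ENNReal.ofReal (v x)) hvm.ennreal_ofReal K (hB K hK) ?_ ?_
    · rw [← i1]; exact hwB K hK
    · intro k E hEK hEm hlt
      have := hit K hK k E hEK hEm hlt
      rwa [hwd, withDensity_apply _ hKm, withDensity_apply _ hEm] at this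
end
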